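/- arXiv:2211.03606 — 4 statements merged into one kernel-verified Lean document; each statement's English description precedes it below -/
import Mathlib

section
/- For any two distinct points a, b ∈ ℝ³ one has ∫_{ℝ³} 1 / (|a−y|² |b−y|²) dy = π³ / |a−b|. -/
open MeasureTheory Real

noncomputable section

lemma aux_ftc (g g' : ℝ → ℝ) (hc : ContinuousOn g (Set.Icc 0 1))
    (hd : ∀ x ∈ Set.Ioo (0:ℝ) 1, HasDerivAt g (g' x) x)
    (hn : ∀ x ∈ Set.Ioo (0:ℝ) 1, 0 ≤ g' x) :
    ∫⁻ u in Set.Ioo (0:ℝ) 1, ENNReal.ofReal (g' u) = ENNReal.ofReal (g 1 - g 0) := by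
  have hi := intervalIntegral.integrableOn_deriv_of_nonneg hc hd hn
  have h1 := intervalIntegral.integral_eq_sub_of_hasDerivAt_of_le zero_le_one hc hd
    ((intervalIntegrable_iff_integrableOn_Ioc_of_le zero_le_one).2 hi)
  rw [intervalIntegral.integral_of_le zero_le_one, integral_Ioc_eq_integral_Ioo] at h1
  rw [← h1, ofReal_integral_eq_lintegral_ofReal]
  · exact hi.mono_set Set.Ioo_subset_Ioc_self
  · exact (ae_restrict_iff' measurableSet_Ioo).2 (Filter.Eventually.of_forall hn)

lemma aux_feyn (A B : ℝ) (hA : 0 < A) (hB : 0 < B) :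
    ∫⁻ u in Set.Ioo (0:ℝ) 1, ENNReal.ofReal (1 / (u * A + (1 - u) * B) ^ 2)
      = ENNReal.ofReal (1 / (A * B)) := by
  have hpos : ∀ x ∈ Set.Icc (0:ℝ) 1, 0 < x * A + (1 - x) * B := by
    rintro x ⟨h0, h1⟩
    rcases h0.eq_or_lt with rfl | h0
    · simpa using hB
    · have := mul_pos h0 hA
      have := mul_nonneg (sub_nonneg.2 h1) hB.le
      linarith
  have hder : ∀ x ∈ Set.Icc (0:ℝ) 1, HasDerivAt (fun u : ℝ => u / (B * (u * A + (1 - u) * B)))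
      (1 / (x * A + (1 - x) * B) ^ 2) x := by
    intro x hx
    have hp := hpos x hx
    have h1 : HasDerivAt (fun u : ℝ => B * (u * A + (1 - u) * B)) (B * (1 * A + (-1) * B)) x :=
      ((((hasDerivAt_id x).mul_const A).add
        (((hasDerivAt_id x).const_sub 1).mul_const B)).const_mul B)
    convert! (hasDerivAt_id x).div h1 (by positivity) using 1
    simp only [id]
    field_simp
    ring
  rw [aux_ftc _ _ (fun x hx => (hder x hx).continuousAt.continuousWithinAt)
    (fun x hx => hder x (Set.Ioo_subset_Icc_self hx)) (fun x _ => by positivity)]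
  congr 1
  field_simp
  ring

lemma aux_arcsin (d : ℝ) (hd : 0 < d) :
    ∫⁻ u in Set.Ioo (0:ℝ) 1, ENNReal.ofReal (π ^ 2 / (√(u * (1 - u)) * d))
      = ENNReal.ofReal (π ^ 3 / d) := by
  rw [aux_ftc (fun u => π ^ 2 / d * arcsin (2 * u - 1))]
  · congr 1
    norm_num
    field_simp
    ring
  · fun_prop
  · intro x hx
    have h2 : HasDerivAt (fun u : ℝ => 2 * u - 1) (2 * 1) x :=
      ((hasDerivAt_id x).const_mul 2).sub_const 1
    have h := ((Real.hasDerivAt_arcsin (x := 2 * x - 1) (by linarith [hx.1])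
      (by linarith [hx.2])).comp x h2).const_mul (π ^ 2 / d)
    convert! h using 1
    have hp : 0 < x * (1 - x) := mul_pos hx.1 (sub_pos.2 hx.2)
    have : √(1 - (2 * x - 1) ^ 2) = 2 * √(x * (1 - x)) := by
      rw [show 1 - (2 * x - 1) ^ 2 = 2 ^ 2 * (x * (1 - x)) by ring, Real.sqrt_mul (by norm_num),
        Real.sqrt_sq (by norm_num)]
    rw [this]
    have := Real.sqrt_pos.2 hp
    field_simp
  · intro x hx
    positivity

lemma aux_radial (c : EuclideanSpace ℝ (Fin 3)) (m : ℝ) (hm : 0 < m) :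
    ∫⁻ y : EuclideanSpace ℝ (Fin 3), ENNReal.ofReal (1 / (‖y - c‖ ^ 2 + m ^ 2) ^ 2)
      = ENNReal.ofReal (π ^ 2 / m) := by
  rw [lintegral_sub_right_eq_self (fun y : EuclideanSpace ℝ (Fin 3) =>
    ENNReal.ofReal (1 / (‖y‖ ^ 2 + m ^ 2) ^ 2)) c]
  have hder : ∀ x ∈ Set.Ici (0:ℝ), HasDerivAt
      (fun r : ℝ => 1 / (2 * m) * arctan (r / m) - r / (2 * (r ^ 2 + m ^ 2)))
      (x ^ 2 * (1 / (x ^ 2 + m ^ 2) ^ 2)) x := by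
    intro x _
    have h1 := ((Real.hasDerivAt_arctan (x / m)).comp x
      ((hasDerivAt_id x).div_const m)).const_mul (1 / (2 * m))
    have h2 : HasDerivAt (fun r : ℝ => 2 * (r ^ 2 + m ^ 2)) (2 * (2 * x)) x := by
      simpa using ((hasDerivAt_pow 2 x).add_const (m ^ 2)).const_mul 2
    convert! h1.sub ((hasDerivAt_id x).div h2 (by positivity)) using 1
    simp only [id]
    have : 1 + (x / m) ^ 2 = (x ^ 2 + m ^ 2) / m ^ 2 := by field_simp; ring
    rw [this]
    have : 0 < x ^ 2 + m ^ 2 := by positivity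
    field_simp
    ring
  have hlim : Filter.Tendsto
      (fun r : ℝ => 1 / (2 * m) * arctan (r / m) - r / (2 * (r ^ 2 + m ^ 2)))
      Filter.atTop (nhds (1 / (2 * m) * (π / 2) - 0)) := by
    refine Filter.Tendsto.sub (Filter.Tendsto.const_mul _ ?_) ?_
    · exact (Real.tendsto_arctan_atTop.mono_right nhdsWithin_le_nhds).comp
        (Filter.tendsto_id.atTop_div_const hm)
    · refine squeeze_zero' (g := fun r : ℝ => r⁻¹) ?_ ?_ tendsto_inv_atTop_zero
      · filter_upwards [Filter.eventually_gt_atTop 0] with r hr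
        positivity
      · filter_upwards [Filter.eventually_gt_atTop 0] with r hr
        rw [div_le_iff₀ (by positivity), inv_mul_eq_div, le_div_iff₀ hr]
        nlinarith [sq_nonneg r, sq_nonneg m]
  have hI := integral_Ioi_of_hasDerivAt_of_nonneg' hder (fun x _ => by positivity) hlim
  have hint := integrableOn_Ioi_deriv_of_nonneg' hder (fun x _ => by positivity) hlim
  have h3 := integral_fun_norm_addHaar (volume : Measure (EuclideanSpace ℝ (Fin 3)))
    (fun r : ℝ => 1 / (r ^ 2 + m ^ 2) ^ 2)
  have h4 := (integrable_fun_norm_addHaar (volume : Measure (EuclideanSpace ℝ (Fin 3)))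
    (f := fun r : ℝ => 1 / (r ^ 2 + m ^ 2) ^ 2)).2 (by simpa using hint)
  rw [← ofReal_integral_eq_lintegral_ofReal h4 (Filter.Eventually.of_forall fun x => by positivity),
    h3]
  congr 1
  simp only [finrank_euclideanSpace, Fintype.card_fin, smul_eq_mul, measureReal_def,
    EuclideanSpace.volume_ball_fin_three, Nat.add_one_sub_one, Nat.reduceSub]
  rw [hI]
  have hpi : 0 ≤ π * 4 / 3 := by positivity
  simp [ENNReal.toReal_ofReal hpi]
  field_simp
  ring

lemma aux_id (a b y : EuclideanSpace ℝ (Fin 3)) (u : ℝ) :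
    u * ‖a - y‖ ^ 2 + (1 - u) * ‖b - y‖ ^ 2
      = ‖y - (u • a + (1 - u) • b)‖ ^ 2 + u * (1 - u) * ‖a - b‖ ^ 2 := by
  simp only [EuclideanSpace.norm_sq_eq, Fin.sum_univ_three, PiLp.sub_apply, PiLp.add_apply,
    PiLp.smul_apply, smul_eq_mul, Real.norm_eq_abs, sq_abs]
  ring

/-- For distinct `a, b ∈ ℝ³`,
`∫ 1/(|a−y|²|b−y|²) dy = π³/|a−b|`. -/
theorem statement3 (a b : EuclideanSpace ℝ (Fin 3)) (hab : a ≠ b) :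
    ∫ y : EuclideanSpace ℝ (Fin 3), 1 / (‖a - y‖ ^ 2 * ‖b - y‖ ^ 2) =
      π ^ 3 / ‖a - b‖ := by
  have hd : 0 < ‖a - b‖ := norm_pos_iff.2 (sub_ne_zero.2 hab)
  rw [integral_eq_lintegral_of_nonneg_ae (Filter.Eventually.of_forall fun x => by positivity)
    (Measurable.aestronglyMeasurable (by fun_prop))]
  have key : ∫⁻ y : EuclideanSpace ℝ (Fin 3),
      ENNReal.ofReal (1 / (‖a - y‖ ^ 2 * ‖b - y‖ ^ 2)) = ENNReal.ofReal (π ^ 3 / ‖a - b‖) := by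
    calc _ = ∫⁻ y : EuclideanSpace ℝ (Fin 3), ∫⁻ u in Set.Ioo (0:ℝ) 1,
          ENNReal.ofReal (1 / (u * ‖a - y‖ ^ 2 + (1 - u) * ‖b - y‖ ^ 2) ^ 2) := by
          refine lintegral_congr_ae ?_
          filter_upwards [Measure.ae_ne volume a, Measure.ae_ne volume b] with y ha hb
          have h1 : 0 < ‖a - y‖ := norm_pos_iff.2 (sub_ne_zero.2 ha.symm)
          have h2 : 0 < ‖b - y‖ := norm_pos_iff.2 (sub_ne_zero.2 hb.symm)
          exact (aux_feyn _ _ (by positivity) (by positivity)).symm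
      _ = ∫⁻ u in Set.Ioo (0:ℝ) 1, ∫⁻ y : EuclideanSpace ℝ (Fin 3),
          ENNReal.ofReal (1 / (u * ‖a - y‖ ^ 2 + (1 - u) * ‖b - y‖ ^ 2) ^ 2) := by
          refine lintegral_lintegral_swap (Measurable.aemeasurable ?_)
          unfold Function.uncurry
          fun_prop
      _ = ∫⁻ u in Set.Ioo (0:ℝ) 1, ENNReal.ofReal (π ^ 2 / (√(u * (1 - u)) * ‖a - b‖)) := by
          refine setLIntegral_congr_fun measurableSet_Ioo fun u hu => ?_
          have hp : 0 < u * (1 - u) := mul_pos hu.1 (sub_pos.2 hu.2)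
          have hs := Real.sqrt_pos.2 hp
          rw [← aux_radial (u • a + (1 - u) • b) _ (mul_pos hs hd)]
          refine lintegral_congr fun y => ?_
          rw [aux_id, mul_pow, Real.sq_sqrt hp.le]
      _ = _ := aux_arcsin _ hd
  rw [key, ENNReal.toReal_ofReal (by positivity)]
end
end

section
/- Let u ∈ H¹(ℝ³; ℂ) with ‖u‖_{L²} = 1, and define g_u(y) := (1/(2π²)) ∫_{ℝ³} |u(x)|² / |x−y|² dx. Then g_u ∈ L²(ℝ³), its norm satisfies ‖g_u‖²_{L²} = (1/(4π)) ∬_{ℝ³×ℝ³} |u(x)|² |u(y)|² / |x−y| dx dy, and consequently inf_{v ∈ L²(ℝ³;ℂ)} [ ‖∇u‖²_{L²} − 2 Re⟨v, g_u⟩_{L²} + ‖v‖²_{L²} ] = ‖∇u‖²_{L²} − (1/(4π)) ∬_{ℝ³×ℝ³} |u(x)|² |u(y)|² / |x−y| dx dy. -/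
open MeasureTheory Real

noncomputable section

namespace PekarAux

open Set Filter Topology

local notation "E3" => EuclideanSpace ℝ (Fin 3)

/-- A nonnegative function with known nonzero Bochner integral has the same lower integral. -/
lemma lint_of_int {α : Type*} [MeasurableSpace α] {μ : Measure α} {f : α → ℝ} {c : ℝ}
    (hf : 0 ≤ᵐ[μ] f) (hc : c ≠ 0) (h : ∫ x, f x ∂μ = c) :
    ∫⁻ x, ENNReal.ofReal (f x) ∂μ = ENNReal.ofReal c := by
  have hi : Integrable f μ := by
    by_contra hn
    exact hc (h ▸ integral_undef hn)
  rw [← h, ofReal_integral_eq_lintegral_ofReal hi hf]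

lemma lint_exp {p : ℝ} (hp : 0 < p) :
    ∫⁻ t in Ioi (0:ℝ), ENNReal.ofReal (rexp (-(t * p))) = ENNReal.ofReal (1 / p) := by
  refine lint_of_int (Eventually.of_forall fun t => (Real.exp_pos _).le) (by positivity) ?_
  have := integral_exp_mul_Ioi (a := -p) (by linarith) 0
  simp only [mul_zero, Real.exp_zero] at this
  rw [show (1 / p : ℝ) = -1 / -p by field_simp, ← this]
  congr 1; ext t; ring_nf

lemma lint_exp' {t q : ℝ} (ht : 0 < t) (hq : 0 < q) :
    ∫⁻ r in Ioi (0:ℝ), ENNReal.ofReal (t * rexp (-(t * r * q))) = ENNReal.ofReal (1 / q) := by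
  have h1 : ∀ r : ℝ, ENNReal.ofReal (t * rexp (-(t * r * q)))
      = ENNReal.ofReal t * ENNReal.ofReal (rexp (-(r * (t * q)))) := by
    intro r
    rw [← ENNReal.ofReal_mul ht.le]; ring_nf
  simp_rw [h1]
  rw [lintegral_const_mul _ (by fun_prop), lint_exp (by positivity), ← ENNReal.ofReal_mul ht.le]
  congr 1; field_simp

lemma lint_gauss (a : E3) {t r : ℝ} (ht : 0 < t) (hr : 0 < r) :
    ∫⁻ y : E3, ENNReal.ofReal (t * rexp (-(t * (‖y‖ ^ 2 + r * ‖y - a‖ ^ 2)))) =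
      ENNReal.ofReal (t * ((π / (t * (1 + r))) ^ (3 / 2 : ℝ) *
        rexp (-(t * (r / (1 + r) * ‖a‖ ^ 2))))) := by
  have hb : 0 < t * (1 + r) := by positivity
  refine lint_of_int (Eventually.of_forall fun y => by positivity) (by positivity) ?_
  have key : ∀ y : E3, t * rexp (-(t * (‖y‖ ^ 2 + r * ‖y - a‖ ^ 2))) =
      (t * rexp (-(t * (r / (1 + r) * ‖a‖ ^ 2)))) *
        rexp (-(t * (1 + r)) * ‖y - (r / (1 + r)) • a‖ ^ 2) := by
    intro y
    rw [mul_assoc, ← Real.exp_add]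
    congr 2
    rw [norm_sub_sq_real, norm_sub_sq_real, inner_smul_right, norm_smul, Real.norm_eq_abs,
      mul_pow, sq_abs]
    field_simp
    ring
  simp_rw [key]
  rw [integral_const_mul,
    integral_sub_right_eq_self (fun y : E3 => rexp (-(t * (1 + r)) * ‖y‖ ^ 2)),
    GaussianFourier.integral_rexp_neg_mul_sq_norm hb]
  simp only [finrank_euclideanSpace, Fintype.card_fin]
  push_cast
  ring

lemma lint_t {A r : ℝ} (hA : 0 < A) (hr : 0 < r) :
    ∫⁻ t in Ioi (0:ℝ), ENNReal.ofReal (t * ((π / (t * (1 + r))) ^ (3 / 2 : ℝ) *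
        rexp (-(t * (r / (1 + r) * A ^ 2))))) =
      ENNReal.ofReal (π ^ 2 / A * (1 / (√r * (1 + r)))) := by
  refine lint_of_int ?_ (by positivity) ?_
  · filter_upwards [ae_restrict_mem measurableSet_Ioi] with t ht
    have : 0 < t := ht
    positivity
  · have key : ∀ t ∈ Ioi (0:ℝ), t * ((π / (t * (1 + r))) ^ (3 / 2 : ℝ) *
        rexp (-(t * (r / (1 + r) * A ^ 2)))) = (π / (1 + r)) ^ (3 / 2 : ℝ) *
        (t ^ ((1 / 2 : ℝ) - 1) * rexp (-((r / (1 + r) * A ^ 2) * t))) := by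
      intro t ht
      have ht : 0 < t := ht
      rw [show π / (t * (1 + r)) = (π / (1 + r)) * t⁻¹ by field_simp,
        Real.mul_rpow (by positivity) (by positivity), Real.inv_rpow ht.le, ← Real.rpow_neg ht.le,
        show (1 / 2 : ℝ) - 1 = 1 + (-(3/2)) by norm_num, Real.rpow_add ht, Real.rpow_one]
      ring_nf
    rw [setIntegral_congr_fun measurableSet_Ioi key, integral_const_mul,
      Real.integral_rpow_mul_exp_neg_mul_Ioi (by norm_num) (by positivity),
      Real.Gamma_one_half_eq, ← Real.sqrt_eq_rpow,
      show (3 / 2 : ℝ) = 1 + 1 / 2 by norm_num, Real.rpow_add (by positivity), Real.rpow_one,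
      ← Real.sqrt_eq_rpow]
    have h1 : √(1 / (r / (1 + r) * A ^ 2)) = √(1 + r) / (√r * A) := by
      rw [show 1 / (r / (1 + r) * A ^ 2) = (1 + r) / (r * A ^ 2) by field_simp,
        Real.sqrt_div (by positivity), Real.sqrt_mul hr.le, Real.sqrt_sq hA.le]
    rw [h1, Real.sqrt_div pi_pos.le]
    have h2 := Real.sq_sqrt pi_pos.le
    have h3 : 0 < √(1 + r) := by positivity
    have h4 : 0 < √r := by positivity
    field_simp
    rw [h2]

lemma lint_r : ∫⁻ r in Ioi (0:ℝ), ENNReal.ofReal (1 / (√r * (1 + r))) = ENNReal.ofReal π := by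
  have hpos : ∀ x ∈ Ioi (0:ℝ), 0 ≤ 1 / (√x * (1 + x)) := by
    intro x hx
    have : 0 < x := hx
    positivity
  refine lint_of_int ?_ pi_ne_zero ?_
  · filter_upwards [ae_restrict_mem measurableSet_Ioi] with t ht using hpos t ht
  · rw [integral_Ioi_of_hasDerivAt_of_nonneg (g := fun r => 2 * arctan (√r)) (l := 2 * (π / 2))]
    · simp
      ring
    · exact (by fun_prop : Continuous fun r : ℝ => 2 * arctan (√r)).continuousWithinAt
    · intro x hx
      have hx : 0 < x := hx
      have := ((Real.hasDerivAt_sqrt hx.ne').arctan).const_mul 2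
      refine this.congr_deriv ?_
      rw [Real.sq_sqrt hx.le]
      field_simp
    · exact hpos
    · refine Tendsto.const_mul 2 ?_
      exact (tendsto_nhds_of_tendsto_nhdsWithin Real.tendsto_arctan_atTop).comp
        Real.tendsto_sqrt_atTop

/-- The composition of two Riesz kernels in dimension three. -/
lemma kernel (a : E3) (ha : a ≠ 0) :
    ∫⁻ y : E3, ENNReal.ofReal (1 / ‖y‖ ^ 2) * ENNReal.ofReal (1 / ‖y - a‖ ^ 2) =
      ENNReal.ofReal (π ^ 3 / ‖a‖) := by
  have hA : 0 < ‖a‖ := norm_pos_iff.2 ha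
  have hpt : ∀ y : E3, y ≠ 0 → y ≠ a →
      ENNReal.ofReal (1 / ‖y‖ ^ 2) * ENNReal.ofReal (1 / ‖y - a‖ ^ 2) =
      ∫⁻ t in Ioi (0:ℝ), ∫⁻ r in Ioi (0:ℝ),
        ENNReal.ofReal (t * rexp (-(t * (‖y‖ ^ 2 + r * ‖y - a‖ ^ 2)))) := by
    intro y h0 h1
    have hp : 0 < ‖y‖ ^ 2 := by have := norm_pos_iff.2 h0; positivity
    have hq : 0 < ‖y - a‖ ^ 2 := by have := norm_pos_iff.2 (sub_ne_zero.2 h1); positivity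
    rw [← lint_exp hp, ← lintegral_mul_const _ (by fun_prop)]
    refine setLIntegral_congr_fun measurableSet_Ioi fun t ht => ?_
    rw [← lint_exp' ht hq, ← lintegral_const_mul _ (by fun_prop)]
    refine lintegral_congr fun r => ?_
    rw [← ENNReal.ofReal_mul (Real.exp_pos _).le, mul_left_comm, ← Real.exp_add]
    ring_nf
  have hae : ∀ᵐ y : E3, y ≠ 0 ∧ y ≠ a := by
    filter_upwards [compl_mem_ae_iff.2 (measure_singleton (0 : E3)),
      compl_mem_ae_iff.2 (measure_singleton a)] with y h1 h2
    exact ⟨h1, h2⟩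
  rw [lintegral_congr_ae (hae.mono fun y hy => hpt y hy.1 hy.2)]
  rw [lintegral_lintegral_swap]
  swap
  · refine Measurable.aemeasurable ?_
    refine Measurable.lintegral_prod_right' (f := fun z : (E3 × ℝ) × ℝ => ENNReal.ofReal
      (z.1.2 * rexp (-(z.1.2 * (‖z.1.1‖ ^ 2 + z.2 * ‖z.1.1 - a‖ ^ 2))))) ?_
    fun_prop
  have h2 : ∀ t ∈ Ioi (0:ℝ), ∫⁻ y : E3, ∫⁻ r in Ioi (0:ℝ),
        ENNReal.ofReal (t * rexp (-(t * (‖y‖ ^ 2 + r * ‖y - a‖ ^ 2)))) =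
        ∫⁻ r in Ioi (0:ℝ), ENNReal.ofReal (t * ((π / (t * (1 + r))) ^ (3 / 2 : ℝ) *
        rexp (-(t * (r / (1 + r) * ‖a‖ ^ 2))))) := by
    intro t ht
    rw [lintegral_lintegral_swap (by fun_prop)]
    exact setLIntegral_congr_fun measurableSet_Ioi fun r hr => lint_gauss a ht hr
  rw [setLIntegral_congr_fun measurableSet_Ioi h2,
    lintegral_lintegral_swap (by fun_prop),
    setLIntegral_congr_fun measurableSet_Ioi fun r hr => lint_t hA hr]
  simp_rw [ENNReal.ofReal_mul (show 0 ≤ π ^ 2 / ‖a‖ by positivity)]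
  rw [lintegral_const_mul _ (by fun_prop), lint_r, ← ENNReal.ofReal_mul (by positivity)]
  congr 1
  ring

lemma kernel' (x z : E3) (h : x ≠ z) :
    ∫⁻ y : E3, ENNReal.ofReal (1 / ‖x - y‖ ^ 2) * ENNReal.ofReal (1 / ‖z - y‖ ^ 2) =
      ENNReal.ofReal (π ^ 3 / ‖x - z‖) := by
  have := kernel (z - x) (sub_ne_zero.2 h.symm)
  rw [← lintegral_sub_right_eq_self _ x] at this
  rw [norm_sub_rev x z, ← this]
  refine lintegral_congr fun y => ?_
  rw [norm_sub_rev x y, norm_sub_rev z y, show y - x - (z - x) = y - z by abel]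

/-- The regularized distance. -/
def sdist (δ : ℝ) (y x : E3) : ℝ := √(‖x - y‖ ^ 2 + δ ^ 2)

lemma sdist_pos {δ : ℝ} (hδ : 0 < δ) (y x : E3) : 0 < sdist δ y x := by
  unfold sdist; positivity

lemma sdist_sq {δ : ℝ} (y x : E3) : sdist δ y x ^ 2 = ‖x - y‖ ^ 2 + δ ^ 2 :=
  Real.sq_sqrt (by positivity)

lemma sdist_cont (δ : ℝ) (y : E3) : Continuous (sdist δ y) := by
  unfold sdist; fun_prop

lemma norm_le_sdist (δ : ℝ) (y x : E3) : ‖x - y‖ ≤ sdist δ y x :=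
  Real.le_sqrt_of_sq_le (by nlinarith [sq_nonneg δ])

lemma le_sdist {δ : ℝ} (y x : E3) : δ ≤ sdist δ y x :=
  Real.le_sqrt_of_sq_le (by nlinarith [sq_nonneg ‖x - y‖])

lemma coord_le (z : E3) (i : Fin 3) : |z i| ≤ ‖z‖ := by
  simpa using PiLp.norm_apply_le z i

lemma field_deriv {δ : ℝ} (hδ : 0 < δ) (y x : E3) (i : Fin 3) :
    HasLineDerivAt ℝ (fun x : E3 => (x i - y i) / sdist δ y x)
      (1 / sdist δ y x - (x i - y i) ^ 2 / sdist δ y x ^ 3) x (EuclideanSpace.single i 1) := by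
  have hs := sdist_pos hδ y x
  have hE : ∀ t : ℝ, sdist δ y (x + t • EuclideanSpace.single i 1) =
      √((‖x - y‖ ^ 2 + δ ^ 2) + 2 * t * (x i - y i) + t ^ 2) := by
    intro t
    unfold sdist
    congr 1
    rw [show x + t • EuclideanSpace.single i (1:ℝ) - y =
      (x - y) + t • EuclideanSpace.single i (1:ℝ) by abel, norm_add_sq_real, inner_smul_right,
      norm_smul, EuclideanSpace.inner_single_right]
    simp
    ring
  unfold HasLineDerivAt
  simp_rw [hE]
  have h0 : (‖x - y‖ ^ 2 + δ ^ 2) + 2 * 0 * (x i - y i) + (0:ℝ) ^ 2 = sdist δ y x ^ 2 := by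
    rw [sdist_sq]; ring
  have h1 : HasDerivAt (fun t : ℝ => (‖x - y‖ ^ 2 + δ ^ 2) + 2 * t * (x i - y i) + t ^ 2)
      (2 * (x i - y i)) 0 := by
    have ha : HasDerivAt (fun t : ℝ => 2 * t * (x i - y i)) (2 * (x i - y i)) 0 := by
      simpa using ((hasDerivAt_id (0:ℝ)).const_mul 2).mul_const (x i - y i)
    have hb : HasDerivAt (fun t : ℝ => t ^ 2) 0 0 := by
      simpa using hasDerivAt_pow 2 (0:ℝ)
    exact ((ha.const_add (‖x - y‖ ^ 2 + δ ^ 2)).add hb).congr_deriv (add_zero _)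
  have h2 := h1.sqrt (by rw [h0]; positivity)
  have h3 : HasDerivAt (fun t : ℝ => (x + t • EuclideanSpace.single i (1:ℝ)) i - y i) 1 0 := by
    have : (fun t : ℝ => (x + t • EuclideanSpace.single i (1:ℝ)) i - y i) =
        fun t => (x i - y i) + t := by
      ext t; simp; ring
    rw [this]
    simpa using (hasDerivAt_id (0:ℝ)).const_add (x i - y i)
  have h4 := h3.div h2 (by rw [h0, Real.sqrt_sq hs.le]; exact hs.ne')
  refine h4.congr_deriv ?_
  rw [h0, Real.sqrt_sq hs.le]
  simp
  field_simp

lemma sum_sq (z : E3) : ∑ i, (z i) ^ 2 = ‖z‖ ^ 2 := by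
  rw [EuclideanSpace.norm_sq_eq]; simp

lemma sq_int {w : E3 → ℂ} (hL : MemLp w 2 volume) : Integrable (fun x => ‖w x‖ ^ 2) :=
  (memLp_two_iff_integrable_sq_norm hL.1).1 hL

lemma hardy_smooth (w : E3 → ℂ) (w' : E3 → E3 →L[ℝ] ℂ) (hw : ∀ x, HasFDerivAt w (w' x) x)
    (hL : MemLp w 2 volume)
    (hL' : ∀ i : Fin 3, MemLp (fun x => w' x (EuclideanSpace.single i 1)) 2 volume)
    (y : E3) {δ : ℝ} (hδ : 0 < δ) :
    Integrable (fun x => ‖w x‖ ^ 2 * (2 / sdist δ y x)) ∧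
    ∫ x, ‖w x‖ ^ 2 * (2 / sdist δ y x) ≤
      3 * (∫ x, ‖w x‖ ^ 2) + ∑ i : Fin 3, ∫ x, ‖w' x (EuclideanSpace.single i 1)‖ ^ 2 := by
  have hsc := sdist_cont δ y
  have hsp := sdist_pos hδ y
  have hf := sq_int hL
  -- bounded continuous multipliers
  have hmul : ∀ m : E3 → ℝ, Continuous m → (∃ C, ∀ x, |m x| ≤ C) →
      ∀ f : E3 → ℝ, Integrable f → Integrable (fun x => f x * m x) := by
    rintro m hm ⟨C, hC⟩ f hf
    exact hf.mul_bdd (c := C) hm.aestronglyMeasurable (Eventually.of_forall hC)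
  have hG : ∀ i : Fin 3, ∀ x : E3, |(x i - y i) / sdist δ y x| ≤ 1 := by
    intro i x
    rw [abs_div, abs_of_pos (hsp x), div_le_one (hsp x)]
    exact (coord_le (x - y) i).trans (norm_le_sdist δ y x)
  have hinv : ∀ x : E3, 1 / sdist δ y x ≤ 1 / δ := fun x =>
    one_div_le_one_div_of_le hδ (le_sdist y x)
  have hGc : ∀ i : Fin 3, Continuous (fun x : E3 => (x i - y i) / sdist δ y x) := fun i =>
    Continuous.div (by fun_prop) hsc fun x => (hsp x).ne'
  have hsplit : ∀ (i : Fin 3) (x : E3), (x i - y i) ^ 2 / sdist δ y x ^ 3 =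
      ((x i - y i) / sdist δ y x) ^ 2 * (1 / sdist δ y x) := by
    intro i x
    have := (hsp x).ne'
    field_simp
  have hic : Continuous (fun x => 1 / sdist δ y x) :=
    Continuous.div (by fun_prop) hsc fun x => (hsp x).ne'
  have hDc : ∀ i : Fin 3, Continuous
      (fun x : E3 => 1 / sdist δ y x - (x i - y i) ^ 2 / sdist δ y x ^ 3) := by
    intro i
    simp_rw [hsplit]
    exact hic.sub (((hGc i).pow 2).mul hic)
  have hD : ∀ (i : Fin 3) (x : E3),
      |1 / sdist δ y x - (x i - y i) ^ 2 / sdist δ y x ^ 3| ≤ 1 / δ := by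
    intro i x
    rw [hsplit]
    have h1 := hinv x
    have h2 : 0 < 1 / sdist δ y x := one_div_pos.2 (hsp x)
    have h3 : ((x i - y i) / sdist δ y x) ^ 2 ≤ 1 := by
      rw [sq_le_one_iff_abs_le_one]; exact hG i x
    have h4 := sq_nonneg ((x i - y i) / sdist δ y x)
    rw [abs_le]
    constructor <;> nlinarith
  have hline : ∀ (i : Fin 3) (x : E3), HasLineDerivAt ℝ (fun x => ‖w x‖ ^ 2)
      (2 * inner ℝ (w x) (w' x (EuclideanSpace.single i 1))) x (EuclideanSpace.single i 1) := by
    intro i x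
    have := ((hw x).norm_sq).hasLineDerivAt (EuclideanSpace.single i 1)
    refine HasDerivAt.congr_deriv this ?_
    simp only [ContinuousLinearMap.smul_apply, ContinuousLinearMap.comp_apply,
      innerSL_apply_apply, smul_eq_mul, nsmul_eq_mul, Nat.cast_ofNat]
  have hbd : ∀ (i : Fin 3) (x : E3), |2 * inner ℝ (w x) (w' x (EuclideanSpace.single i 1))| ≤
      ‖w x‖ ^ 2 + ‖w' x (EuclideanSpace.single i 1)‖ ^ 2 := by
    intro i x
    rw [abs_mul, abs_two]
    have := abs_real_inner_le_norm (w x) (w' x (EuclideanSpace.single i 1))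
    nlinarith [sq_nonneg (‖w x‖ - ‖w' x (EuclideanSpace.single i 1)‖)]
  have hf' : ∀ i : Fin 3, Integrable
      (fun x => 2 * inner ℝ (w x) (w' x (EuclideanSpace.single i 1))) := by
    intro i
    refine Integrable.mono' (hf.add (sq_int (hL' i))) ?_ (Eventually.of_forall (hbd i))
    exact (hL.1.inner (hL' i).1).const_mul 2
  have ibp : ∀ i : Fin 3,
      ∫ x, ‖w x‖ ^ 2 * (1 / sdist δ y x - (x i - y i) ^ 2 / sdist δ y x ^ 3) ≤
        (∫ x, ‖w x‖ ^ 2) + ∫ x, ‖w' x (EuclideanSpace.single i 1)‖ ^ 2 := by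
    intro i
    have h := integral_bilinear_hasLineDerivAt_right_eq_neg_left_of_integrable (μ := volume)
      (B := ContinuousLinearMap.mul ℝ ℝ)
      (f := fun x => ‖w x‖ ^ 2)
      (f' := fun x => 2 * inner ℝ (w x) (w' x (EuclideanSpace.single i 1)))
      (g := fun x : E3 => (x i - y i) / sdist δ y x)
      (g' := fun x => 1 / sdist δ y x - (x i - y i) ^ 2 / sdist δ y x ^ 3)
      (v := EuclideanSpace.single i 1)
      (hmul _ (hGc i) ⟨1, hG i⟩ _ (hf' i))
      (hmul _ (hDc i) ⟨_, hD i⟩ _ hf)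
      (hmul _ (hGc i) ⟨1, hG i⟩ _ hf)
      (fun x _ => hline i x) (fun x _ => field_deriv hδ y x i)
    simp only [ContinuousLinearMap.mul_apply'] at h
    rw [h, ← integral_neg, ← integral_add hf (sq_int (hL' i))]
    refine integral_mono (hmul _ (hGc i) ⟨1, hG i⟩ _ (hf' i)).neg (hf.add (sq_int (hL' i))) ?_
    intro x
    have h1 := hbd i x
    have h2 := hG i x
    refine (neg_le_abs _).trans ?_
    rw [abs_mul]
    calc _ ≤ |2 * inner ℝ (w x) (w' x (EuclideanSpace.single i 1))| * 1 := by gcongr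
      _ ≤ _ := by rw [mul_one]; exact h1
  have hI : Integrable (fun x => ‖w x‖ ^ 2 * (2 / sdist δ y x)) := by
    refine hmul (fun x => 2 / sdist δ y x) ?_ ⟨2 / δ, fun x => ?_⟩ _ hf
    · exact Continuous.div (by fun_prop) hsc fun x => (hsp x).ne'
    · rw [abs_of_pos (by have := hsp x; positivity)]
      exact div_le_div_of_nonneg_left (by norm_num) hδ (le_sdist y x)
  refine ⟨hI, ?_⟩
  calc ∫ x, ‖w x‖ ^ 2 * (2 / sdist δ y x)
      ≤ ∫ x, ∑ i : Fin 3,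
          ‖w x‖ ^ 2 * (1 / sdist δ y x - (x i - y i) ^ 2 / sdist δ y x ^ 3) := by
        refine integral_mono hI (integrable_finsetSum _ fun i _ =>
          hmul _ (hDc i) ⟨_, hD i⟩ _ hf) fun x => ?_
        simp only
        rw [← Finset.mul_sum]
        refine mul_le_mul_of_nonneg_left ?_ (by positivity)
        rw [Finset.sum_sub_distrib, ← Finset.sum_div (f := fun i => (x i - y i) ^ 2)]
        have h1 : ∑ i, (x i - y i) ^ 2 = ‖x - y‖ ^ 2 := by
          rw [← sum_sq]; simp
        have h2 := hsp x
        have h3 : ‖x - y‖ ^ 2 / sdist δ y x ^ 3 ≤ 1 / sdist δ y x := by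
          rw [div_le_div_iff₀ (by positivity) h2]
          have := sdist_sq (δ := δ) y x
          nlinarith [sq_nonneg δ]
        rw [h1]
        simp only [Finset.sum_const, Finset.card_univ, Fintype.card_fin, nsmul_eq_mul]
        have h4 : 2 / sdist δ y x = 2 * (1 / sdist δ y x) := by ring
        rw [h4]
        push_cast
        linarith
    _ = ∑ i : Fin 3,
          ∫ x, ‖w x‖ ^ 2 * (1 / sdist δ y x - (x i - y i) ^ 2 / sdist δ y x ^ 3) :=
        integral_finsetSum _ fun i _ => hmul _ (hDc i) ⟨_, hD i⟩ _ hf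
    _ ≤ ∑ i : Fin 3, ((∫ x, ‖w x‖ ^ 2) + ∫ x, ‖w' x (EuclideanSpace.single i 1)‖ ^ 2) :=
        Finset.sum_le_sum fun i _ => ibp i
    _ = _ := by
        rw [Finset.sum_add_distrib]
        simp

open scoped Convolution

/-- Mollification does not increase the `L²` norm. -/
lemma moll_le (η : E3 → ℝ) (hη : Continuous η) (h0 : ∀ x, 0 ≤ η x)
    (h1 : ∫⁻ x, ENNReal.ofReal (η x) = 1) (f : E3 → ℂ) (hf : StronglyMeasurable f) :
    ∫⁻ x, ‖(η ⋆[ContinuousLinearMap.lsmul ℝ ℝ, volume] f) x‖ₑ ^ 2 ≤ ∫⁻ x, ‖f x‖ₑ ^ 2 := by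
  have hfm := hf.measurable
  have hηm := hη.measurable
  have hpt : ∀ x, ‖(η ⋆[ContinuousLinearMap.lsmul ℝ ℝ, volume] f) x‖ₑ ^ 2 ≤
      ∫⁻ t, ENNReal.ofReal (η t) * ‖f (x - t)‖ₑ ^ 2 := by
    intro x
    rw [convolution_def]
    have e1 : ‖∫ t, ContinuousLinearMap.lsmul ℝ ℝ (η t) (f (x - t))‖ₑ ≤
        ∫⁻ t, ENNReal.ofReal (η t) * ‖f (x - t)‖ₑ := by
      refine (enorm_integral_le_lintegral_enorm _).trans (le_of_eq ?_)
      refine lintegral_congr fun t => ?_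
      simp only [ContinuousLinearMap.lsmul_apply, enorm_smul, Real.enorm_of_nonneg (h0 t)]
    have e2 : ∫⁻ t, ENNReal.ofReal (η t) * ‖f (x - t)‖ₑ ≤
        (∫⁻ t, ENNReal.ofReal (η t) * ‖f (x - t)‖ₑ ^ 2) ^ (1 / 2 : ℝ) := by
      have := ENNReal.lintegral_mul_le_Lp_mul_Lq volume (p := 2) (q := 2)
        (by constructor <;> norm_num)
        (f := fun t => ENNReal.ofReal (η t) ^ (1 / 2 : ℝ))
        (g := fun t => ENNReal.ofReal (η t) ^ (1 / 2 : ℝ) * ‖f (x - t)‖ₑ)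
        (by fun_prop) (by fun_prop)
      simp only [Pi.mul_apply] at this
      have hs : ∀ t, ENNReal.ofReal (η t) ^ (1 / 2 : ℝ) * ENNReal.ofReal (η t) ^ (1 / 2 : ℝ) =
          ENNReal.ofReal (η t) := by
        intro t
        rw [← ENNReal.rpow_add_of_nonneg _ _ (by norm_num) (by norm_num)]
        norm_num
      simp_rw [← mul_assoc, hs, ENNReal.mul_rpow_of_nonneg _ _ (show (0:ℝ) ≤ 2 by norm_num),
        ← ENNReal.rpow_mul] at this
      norm_num at this
      rw [h1] at this
      simpa using this
    calc _ ≤ ((∫⁻ t, ENNReal.ofReal (η t) * ‖f (x - t)‖ₑ ^ 2) ^ (1 / 2 : ℝ)) ^ 2 := by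
          gcongr; exact e1.trans e2
      _ = _ := by
          rw [← ENNReal.rpow_natCast, ← ENNReal.rpow_mul]; norm_num
  refine (lintegral_mono hpt).trans ?_
  rw [lintegral_lintegral_swap (by fun_prop)]
  have : ∀ t, ∫⁻ x, ENNReal.ofReal (η t) * ‖f (x - t)‖ₑ ^ 2 =
      ENNReal.ofReal (η t) * ∫⁻ x, ‖f x‖ₑ ^ 2 := by
    intro t
    rw [lintegral_const_mul _ (by fun_prop), lintegral_sub_right_eq_self (fun x => ‖f x‖ₑ ^ 2)]
  simp_rw [this]
  rw [lintegral_mul_const _ (by fun_prop), h1, one_mul]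

lemma lint_sq {f : E3 → ℂ} (hf : MemLp f 2 volume) :
    ∫⁻ x, ‖f x‖ₑ ^ 2 = ENNReal.ofReal (∫ x, ‖f x‖ ^ 2) := by
  rw [ofReal_integral_eq_lintegral_ofReal (sq_int hf) (Eventually.of_forall fun x => by positivity)]
  refine lintegral_congr fun x => ?_
  rw [ENNReal.ofReal_pow (norm_nonneg _), ofReal_norm]

lemma moll_memLp (η : E3 → ℝ) (hη : Continuous η) (hc : HasCompactSupport η) (h0 : ∀ x, 0 ≤ η x)
    (h1 : ∫⁻ x, ENNReal.ofReal (η x) = 1) (f : E3 → ℂ) (hf : StronglyMeasurable f)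
    (hL : MemLp f 2 volume) :
    MemLp (η ⋆[ContinuousLinearMap.lsmul ℝ ℝ, volume] f) 2 volume ∧
    ∫ x, ‖(η ⋆[ContinuousLinearMap.lsmul ℝ ℝ, volume] f) x‖ ^ 2 ≤ ∫ x, ‖f x‖ ^ 2 := by
  have hle := moll_le η hη h0 h1 f hf
  have hloc : LocallyIntegrable f volume := hL.locallyIntegrable (by norm_num)
  have hcont : Continuous (η ⋆[ContinuousLinearMap.lsmul ℝ ℝ, volume] f) :=
    hc.continuous_convolution_left _ hη hloc
  have hM : MemLp (η ⋆[ContinuousLinearMap.lsmul ℝ ℝ, volume] f) 2 volume := by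
    refine ⟨hcont.aestronglyMeasurable, ?_⟩
    rw [eLpNorm_lt_top_iff_lintegral_rpow_enorm_lt_top (by norm_num) (by norm_num)]
    simp only [ENNReal.toReal_ofNat, ENNReal.rpow_ofNat]
    refine hle.trans_lt ?_
    rw [lint_sq hL]
    exact ENNReal.ofReal_lt_top
  refine ⟨hM, ?_⟩
  rw [lint_sq hL, lint_sq hM] at hle
  exact (ENNReal.ofReal_le_ofReal_iff (integral_nonneg fun x => by positivity)).1 hle

lemma moll_deriv (u : E3 → ℂ) (u' : Fin 3 → E3 → ℂ) (hu : MemLp u 2 volume)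
    (hweak : ∀ i, ∀ φ : E3 → ℝ, ContDiff ℝ (⊤ : ℕ∞) φ → HasCompactSupport φ →
      ∫ x, u x * (fderiv ℝ φ x (EuclideanSpace.single i 1) : ℂ) =
        - ∫ x, u' i x * (φ x : ℂ))
    (η : E3 → ℝ) (hη : ContDiff ℝ (⊤ : ℕ∞) η) (hc : HasCompactSupport η) (x : E3) :
    ∃ L : E3 →L[ℝ] ℂ,
      HasFDerivAt (η ⋆[ContinuousLinearMap.lsmul ℝ ℝ, volume] u) L x ∧
      ∀ i, L (EuclideanSpace.single i 1) =
        (η ⋆[ContinuousLinearMap.lsmul ℝ ℝ, volume] u' i) x := by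
  have hloc : LocallyIntegrable u volume := hu.locallyIntegrable (by norm_num)
  have hη1 : ContDiff ℝ 1 η := hη.of_le (by exact_mod_cast le_top)
  have hd := hc.hasFDerivAt_convolution_right
    ((ContinuousLinearMap.lsmul ℝ ℝ : ℝ →L[ℝ] ℂ →L[ℝ] ℂ).flip) hloc hη1 x
  refine ⟨_, by rw [← convolution_flip]; exact hd, fun i => ?_⟩
  rw [convolution_precompR_apply _ hloc (hc.fderiv ℝ) (hη1.continuous_fderiv one_ne_zero)]
  rw [← convolution_flip (f := η) (g := u' i), convolution_def, convolution_def]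
  have hψ : ContDiff ℝ (⊤ : ℕ∞) (fun t => η (x - t)) := hη.comp (contDiff_const.sub contDiff_id)
  have hψc : HasCompactSupport (fun t => η (x - t)) :=
    hc.comp_homeomorph (Homeomorph.subLeft x)
  have h := hweak i _ hψ hψc
  have hfd : ∀ t, fderiv ℝ (fun t => η (x - t)) t (EuclideanSpace.single i 1) =
      - fderiv ℝ η (x - t) (EuclideanSpace.single i 1) := by
    intro t
    have h2 : HasFDerivAt (fun t : E3 => x - t) (-(ContinuousLinearMap.id ℝ E3)) t := by
      simpa using (hasFDerivAt_id t).const_sub x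
    have h3 := ((hη1.differentiable one_ne_zero) (x - t)).hasFDerivAt.comp t h2
    have h4 := h3.fderiv
    simp only [Function.comp_def] at h4
    rw [h4]
    simp
  simp_rw [hfd] at h
  simp only [ContinuousLinearMap.flip_apply, ContinuousLinearMap.lsmul_apply,
    Complex.real_smul]
  have h5 : ∫ t, ((fderiv ℝ η (x - t) (EuclideanSpace.single i 1) : ℝ) : ℂ) * u t =
      - ∫ t, u t * ((- fderiv ℝ η (x - t) (EuclideanSpace.single i 1) : ℝ) : ℂ) := by
    rw [← integral_neg]
    congr 1; ext t; push_cast; ring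
  rw [h5, h, neg_neg]
  congr 1; ext t; ring

lemma hardy (u : E3 → ℂ) (u' : Fin 3 → E3 → ℂ) (hum : StronglyMeasurable u)
    (hum' : ∀ i, StronglyMeasurable (u' i)) (hu : MemLp u 2 volume)
    (hu' : ∀ i, MemLp (u' i) 2 volume)
    (hweak : ∀ i, ∀ φ : E3 → ℝ, ContDiff ℝ (⊤ : ℕ∞) φ → HasCompactSupport φ →
      ∫ x, u x * (fderiv ℝ φ x (EuclideanSpace.single i 1) : ℂ) =
        - ∫ x, u' i x * (φ x : ℂ)) (y : E3) :
    ∫⁻ x, ENNReal.ofReal (‖u x‖ ^ 2 * (2 / ‖x - y‖)) ≤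
      ENNReal.ofReal (3 * (∫ x, ‖u x‖ ^ 2) + ∑ i : Fin 3, ∫ x, ‖u' i x‖ ^ 2) := by
  have hd : ∀ n : ℕ, (0:ℝ) < 1 / ((n:ℝ) + 1) := fun n => by positivity
  let φ : ℕ → ContDiffBump (0 : E3) := fun n =>
    ⟨1 / ((n:ℝ) + 1), 2 * (1 / ((n:ℝ) + 1)), hd n, by linarith [hd n]⟩
  let η : ℕ → E3 → ℝ := fun n => (φ n).normed volume
  let U : ℕ → E3 → ℂ := fun n => η n ⋆[ContinuousLinearMap.lsmul ℝ ℝ, volume] u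
  have hlim : Tendsto (fun n : ℕ => 1 / ((n:ℝ) + 1)) atTop (𝓝 0) :=
    tendsto_one_div_add_atTop_nhds_zero_nat
  have hηc : ∀ n, ContDiff ℝ (⊤ : ℕ∞) (η n) := fun n => (φ n).contDiff_normed
  have hηs : ∀ n, HasCompactSupport (η n) := fun n => (φ n).hasCompactSupport_normed
  have hη0 : ∀ n x, 0 ≤ η n x := fun n x => (φ n).nonneg_normed x
  have hη1 : ∀ n, ∫⁻ x, ENNReal.ofReal (η n x) = 1 := by
    intro n
    rw [lint_of_int (Eventually.of_forall (hη0 n)) one_ne_zero (φ n).integral_normed]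
    simp
  have hae : ∀ᵐ x, Tendsto (fun n => U n x) atTop (𝓝 (u x)) := by
    refine ContDiffBump.ae_convolution_tendsto_right_of_locallyIntegrable (K := 2) ?_ ?_
      (hu.locallyIntegrable (by norm_num))
    · simpa [φ] using hlim.const_mul 2
    · exact Eventually.of_forall fun n => le_rfl
  have hne : ∀ᵐ x : E3, x ≠ y := compl_mem_ae_iff.2 (measure_singleton y)
  have hU : ∀ n, MemLp (U n) 2 volume ∧ ∫ x, ‖U n x‖ ^ 2 ≤ ∫ x, ‖u x‖ ^ 2 := fun n =>
    moll_memLp (η n) (hηc n).continuous (hηs n) (hη0 n) (hη1 n) u hum hu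
  have hbound : ∀ n : ℕ,
      ∫⁻ x, ENNReal.ofReal (‖U n x‖ ^ 2 * (2 / sdist (1 / ((n:ℝ) + 1)) y x)) ≤
      ENNReal.ofReal (3 * (∫ x, ‖u x‖ ^ 2) + ∑ i : Fin 3, ∫ x, ‖u' i x‖ ^ 2) := by
    intro n
    choose L hL1 hL2 using moll_deriv u u' hu hweak (η n) (hηc n) (hηs n)
    have hV : ∀ i, MemLp (fun x => L x (EuclideanSpace.single i 1)) 2 volume ∧
        ∫ x, ‖L x (EuclideanSpace.single i 1)‖ ^ 2 ≤ ∫ x, ‖u' i x‖ ^ 2 := by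
      intro i
      simp_rw [hL2 _ i]
      exact moll_memLp (η n) (hηc n).continuous (hηs n) (hη0 n) (hη1 n) (u' i) (hum' i) (hu' i)
    obtain ⟨hI, hle⟩ := hardy_smooth (U n) L hL1 (hU n).1 (fun i => (hV i).1) y (hd n)
    rw [← ofReal_integral_eq_lintegral_ofReal hI (Eventually.of_forall fun x => by
      have := sdist_pos (hd n) y x
      positivity)]
    refine ENNReal.ofReal_le_ofReal (hle.trans ?_)
    have := (hU n).2
    have h2 := Finset.sum_le_sum fun i (_ : i ∈ Finset.univ) => (hV i).2
    linarith
  have hmeas : ∀ n : ℕ, Measurable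
      (fun x => ENNReal.ofReal (‖U n x‖ ^ 2 * (2 / sdist (1 / ((n:ℝ) + 1)) y x))) := by
    intro n
    have h1 : Continuous (U n) := (hηs n).continuous_convolution_left _ (hηc n).continuous
      (hu.locallyIntegrable (by norm_num))
    have h2 := sdist_cont (1 / ((n:ℝ) + 1)) y
    have h3 := h1.measurable
    have h4 := h2.measurable
    fun_prop
  calc ∫⁻ x, ENNReal.ofReal (‖u x‖ ^ 2 * (2 / ‖x - y‖))
      = ∫⁻ x, liminf (fun n : ℕ =>
          ENNReal.ofReal (‖U n x‖ ^ 2 * (2 / sdist (1 / ((n:ℝ) + 1)) y x))) atTop := by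
        refine lintegral_congr_ae ?_
        filter_upwards [hae, hne] with x hx hxy
        refine (Tendsto.liminf_eq ?_).symm
        refine (ENNReal.continuous_ofReal.tendsto _).comp ?_
        refine (hx.norm.pow 2).mul (tendsto_const_nhds.div ?_
          (norm_pos_iff.2 (sub_ne_zero.2 hxy)).ne')
        have h1 : Tendsto (fun n : ℕ => √(‖x - y‖ ^ 2 + (1 / ((n:ℝ) + 1)) ^ 2)) atTop
            (𝓝 (√(‖x - y‖ ^ 2 + 0 ^ 2))) :=
          (Real.continuous_sqrt.tendsto _).comp (tendsto_const_nhds.add (hlim.pow 2))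
        simpa [sdist] using h1
    _ ≤ liminf (fun n : ℕ => ∫⁻ x,
          ENNReal.ofReal (‖U n x‖ ^ 2 * (2 / sdist (1 / ((n:ℝ) + 1)) y x))) atTop :=
        lintegral_liminf_le hmeas
    _ ≤ _ := by
        refine liminf_le_of_le (by isBoundedDefault) fun b hb => ?_
        obtain ⟨n, hn⟩ := hb.exists
        exact hn.trans (hbound n)

lemma core (u : E3 → ℂ) (u' : Fin 3 → E3 → ℂ) (hum : StronglyMeasurable u)
    (hum' : ∀ i, StronglyMeasurable (u' i)) (hu : MemLp u 2 volume)
    (hu' : ∀ i, MemLp (u' i) 2 volume)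
    (hweak : ∀ i, ∀ φ : E3 → ℝ, ContDiff ℝ (⊤ : ℕ∞) φ → HasCompactSupport φ →
      ∫ x, u x * (fderiv ℝ φ x (EuclideanSpace.single i 1) : ℂ) =
        - ∫ x, u' i x * (φ x : ℂ))
    (g : E3 → ℝ)
    (hg : ∀ y, g y = (1 / (2 * π ^ 2)) * ∫ x, ‖u x‖ ^ 2 / ‖x - y‖ ^ 2) :
    MemLp g 2 volume ∧
    (∫ y, g y ^ 2) =
      (1 / (4 * π)) * (∫ x, ∫ y, ‖u x‖ ^ 2 * ‖u y‖ ^ 2 / ‖x - y‖) := by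
  have hm := hum.measurable
  set B : ℝ := 3 * (∫ x, ‖u x‖ ^ 2) + ∑ i : Fin 3, ∫ x, ‖u' i x‖ ^ 2 with hB
  let R : E3 → ENNReal := fun x => ENNReal.ofReal (‖u x‖ ^ 2)
  let k : E3 → E3 → ENNReal := fun x y => ENNReal.ofReal (1 / ‖x - y‖ ^ 2)
  let G : E3 → ENNReal := fun y => ∫⁻ x, R x * k x y
  let I : E3 → ENNReal := fun x => ∫⁻ z, ENNReal.ofReal (‖u x‖ ^ 2 * ‖u z‖ ^ 2 / ‖x - z‖)
  have hR : Measurable R := by fun_prop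
  have hk : Measurable (Function.uncurry k) := by
    unfold Function.uncurry; fun_prop
  have hk1 : ∀ y, Measurable fun x => k x y := fun y => by fun_prop
  have hk2 : ∀ x, Measurable fun y => k x y := fun x => by fun_prop
  have hGm : Measurable G :=
    Measurable.lintegral_prod_right' (f := fun p : E3 × E3 => R p.2 * k p.2 p.1) (by fun_prop)
  have hIm : Measurable I :=
    Measurable.lintegral_prod_right' (f := fun p : E3 × E3 =>
      ENNReal.ofReal (‖u p.1‖ ^ 2 * ‖u p.2‖ ^ 2 / ‖p.1 - p.2‖)) (by fun_prop)
  have hIle : ∀ x, I x ≤ R x * ENNReal.ofReal B := by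
    intro x
    calc I x ≤ ∫⁻ z, R x * ENNReal.ofReal (‖u z‖ ^ 2 * (2 / ‖z - x‖)) := by
          refine lintegral_mono fun z => ?_
          simp only [R]
          rw [← ENNReal.ofReal_mul (by positivity)]
          refine ENNReal.ofReal_le_ofReal ?_
          rw [norm_sub_rev x z, mul_div_assoc]
          refine mul_le_mul_of_nonneg_left ?_ (by positivity)
          rw [div_eq_mul_one_div]
          refine mul_le_mul_of_nonneg_left ?_ (by positivity)
          exact div_le_div_of_nonneg_right (by norm_num) (norm_nonneg _)
      _ = R x * ∫⁻ z, ENNReal.ofReal (‖u z‖ ^ 2 * (2 / ‖z - x‖)) :=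
          lintegral_const_mul _ (by fun_prop)
      _ ≤ _ := by
          gcongr
          exact hardy u u' hum hum' hu hu' hweak x
  have hIfin : ∀ x, I x < ⊤ := fun x =>
    (hIle x).trans_lt (ENNReal.mul_lt_top ENNReal.ofReal_lt_top ENNReal.ofReal_lt_top)
  have hJ : ∫⁻ x, I x < ⊤ := by
    refine (lintegral_mono hIle).trans_lt ?_
    rw [lintegral_mul_const _ hR]
    refine ENNReal.mul_lt_top ?_ ENNReal.ofReal_lt_top
    simp only [R]
    rw [← ofReal_integral_eq_lintegral_ofReal (sq_int hu)
      (Eventually.of_forall fun x => by positivity)]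
    exact ENNReal.ofReal_lt_top
  have hRHS : (∫ x, ∫ y, ‖u x‖ ^ 2 * ‖u y‖ ^ 2 / ‖x - y‖) = (∫⁻ x, I x).toReal := by
    rw [← integral_toReal hIm.aemeasurable (Eventually.of_forall hIfin)]
    congr 1; ext x
    rw [integral_eq_lintegral_of_nonneg_ae (Eventually.of_forall fun y => by positivity)]
    exact (by fun_prop : Measurable fun y =>
      ‖u x‖ ^ 2 * ‖u y‖ ^ 2 / ‖x - y‖).aestronglyMeasurable
  have hgG : ∀ y, g y = (1 / (2 * π ^ 2)) * (G y).toReal := by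
    intro y
    rw [hg, integral_eq_lintegral_of_nonneg_ae (Eventually.of_forall fun y => by positivity)]
    · congr 2
      refine lintegral_congr fun x => ?_
      simp only [R, k]
      rw [← ENNReal.ofReal_mul (by positivity)]
      congr 1; ring
    · exact (by fun_prop : Measurable fun x => ‖u x‖ ^ 2 / ‖x - y‖ ^ 2).aestronglyMeasurable
  have hGG : ∫⁻ y, G y ^ 2 = ENNReal.ofReal (π ^ 3) * ∫⁻ x, I x := by
    have h1 : ∀ y, G y ^ 2 = ∫⁻ x, ∫⁻ z, (R x * R z) * (k x y * k z y) := by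
      intro y
      have hRk : Measurable fun x => R x * k x y := hR.mul (hk1 y)
      have h2 : G y * G y = ∫⁻ x, R x * k x y * G y := (lintegral_mul_const _ hRk).symm
      rw [pow_two, h2]
      refine lintegral_congr fun x => ?_
      have h3 : R x * k x y * G y = ∫⁻ z, R x * k x y * (R z * k z y) :=
        (lintegral_const_mul _ hRk).symm
      rw [h3]
      refine lintegral_congr fun z => ?_
      ring
    simp_rw [h1]
    rw [lintegral_lintegral_swap, ← lintegral_const_mul _ hIm]
    swap
    · refine Measurable.aemeasurable ?_
      refine Measurable.lintegral_prod_right' (f := fun p : (E3 × E3) × E3 =>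
        (R p.1.2 * R p.2) * (k p.1.2 p.1.1 * k p.2 p.1.1)) ?_
      fun_prop
    refine lintegral_congr fun x => ?_
    rw [lintegral_lintegral_swap (by fun_prop), ← lintegral_const_mul _ (by fun_prop)]
    have hne : ∀ᵐ z : E3, z ≠ x := compl_mem_ae_iff.2 (measure_singleton x)
    refine lintegral_congr_ae ?_
    filter_upwards [hne] with z hz
    rw [lintegral_const_mul _ (by fun_prop)]
    simp only [k, R]
    rw [kernel' x z hz.symm, ← ENNReal.ofReal_mul (by positivity),
      ← ENNReal.ofReal_mul (by positivity), ← ENNReal.ofReal_mul (by positivity)]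
    congr 1; ring
  have hGGfin : ∫⁻ y, G y ^ 2 ≠ ⊤ := by
    rw [hGG]; exact (ENNReal.mul_lt_top ENNReal.ofReal_lt_top hJ).ne
  have hg2 : ∀ y, g y ^ 2 = (1 / (2 * π ^ 2)) ^ 2 * (G y ^ 2).toReal := by
    intro y
    rw [hgG, mul_pow, ENNReal.toReal_pow]
  have hgm : Measurable g := by
    rw [show g = fun y => (1 / (2 * π ^ 2)) * (G y).toReal from funext hgG]
    fun_prop
  constructor
  · rw [memLp_two_iff_integrable_sq hgm.aestronglyMeasurable]
    simp_rw [hg2]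
    exact (integrable_toReal_of_lintegral_ne_top (by fun_prop) hGGfin).const_mul _
  · simp_rw [hg2]
    rw [integral_const_mul, integral_toReal (by fun_prop) (ae_lt_top (by fun_prop) hGGfin), hGG,
      hRHS, ENNReal.toReal_mul, ENNReal.toReal_ofReal (by positivity)]
    have := pi_pos
    field_simp
    ring

end PekarAux

/-- For normalized `u ∈ H¹(ℝ³;ℂ)` (with weak partial derivatives `u'`),
the field `g_u(y) = (1/(2π²)) ∫ |u(x)|²/|x−y|² dx` is in `L²`, its squared norm equals
`(1/(4π)) ∬ |u(x)|²|u(y)|²/|x−y|`, and the infimum over `v ∈ L²` of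
`‖∇u‖² − 2Re⟨v, g_u⟩ + ‖v‖²` equals `‖∇u‖² − (1/(4π)) ∬ |u(x)|²|u(y)|²/|x−y|`. -/
theorem statement4
    (u : EuclideanSpace ℝ (Fin 3) → ℂ)
    (u' : Fin 3 → EuclideanSpace ℝ (Fin 3) → ℂ)
    (hu : MemLp u 2 volume)
    (hu' : ∀ i, MemLp (u' i) 2 volume)
    (hweak : ∀ i, ∀ φ : EuclideanSpace ℝ (Fin 3) → ℝ,
      ContDiff ℝ (⊤ : ℕ∞) φ → HasCompactSupport φ →
      ∫ x, u x * (fderiv ℝ φ x (EuclideanSpace.single i 1) : ℂ) =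
        - ∫ x, u' i x * (φ x : ℂ))
    (hnorm : ∫ x, ‖u x‖ ^ 2 = 1)
    (g : EuclideanSpace ℝ (Fin 3) → ℝ)
    (hg : ∀ y, g y = (1 / (2 * π ^ 2)) * ∫ x, ‖u x‖ ^ 2 / ‖x - y‖ ^ 2) :
    MemLp g 2 volume ∧
    (∫ y, g y ^ 2) =
      (1 / (4 * π)) * (∫ x, ∫ y, ‖u x‖ ^ 2 * ‖u y‖ ^ 2 / ‖x - y‖) ∧
    sInf { r : ℝ | ∃ v : EuclideanSpace ℝ (Fin 3) → ℂ, MemLp v 2 volume ∧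
        r = (∫ x, ∑ i, ‖u' i x‖ ^ 2) - 2 * (∫ y, (v y).re * g y) + ∫ y, ‖v y‖ ^ 2 } =
      (∫ x, ∑ i, ‖u' i x‖ ^ 2) -
        (1 / (4 * π)) * (∫ x, ∫ y, ‖u x‖ ^ 2 * ‖u y‖ ^ 2 / ‖x - y‖) := by
  have hmain : MemLp g 2 volume ∧ (∫ y, g y ^ 2) =
      (1 / (4 * π)) * (∫ x, ∫ y, ‖u x‖ ^ 2 * ‖u y‖ ^ 2 / ‖x - y‖) := by
    have e : u =ᵐ[volume] hu.1.mk u := hu.1.ae_eq_mk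
    have e' : ∀ i, u' i =ᵐ[volume] (hu' i).1.mk (u' i) := fun i => (hu' i).1.ae_eq_mk
    have h := PekarAux.core (hu.1.mk u) (fun i => (hu' i).1.mk (u' i))
      hu.1.stronglyMeasurable_mk (fun i => (hu' i).1.stronglyMeasurable_mk)
      (hu.ae_eq e) (fun i => (hu' i).ae_eq (e' i)) ?_ g ?_
    · refine ⟨h.1, h.2.trans ?_⟩
      congr 1
      refine integral_congr_ae ?_
      filter_upwards [e] with x hx
      refine integral_congr_ae ?_
      filter_upwards [e] with y hy
      rw [hx, hy]
    · intro i φ h1 h2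
      have h3 := hweak i φ h1 h2
      have h4 : ∫ x, hu.1.mk u x * (fderiv ℝ φ x (EuclideanSpace.single i 1) : ℂ) =
          ∫ x, u x * (fderiv ℝ φ x (EuclideanSpace.single i 1) : ℂ) := by
        refine integral_congr_ae ?_
        filter_upwards [e] with x hx
        rw [hx]
      have h5 : ∫ x, (hu' i).1.mk (u' i) x * (φ x : ℂ) = ∫ x, u' i x * (φ x : ℂ) := by
        refine integral_congr_ae ?_
        filter_upwards [e' i] with x hx
        rw [hx]
      rw [h4, h5, h3]
    · intro y
      rw [hg]
      congr 1
      refine integral_congr_ae ?_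
      filter_upwards [e] with x hx
      rw [hx]
  obtain ⟨hgL, hgE⟩ := hmain
  refine ⟨hgL, hgE, ?_⟩
  rw [← hgE]
  have hg2 : Integrable (fun y => g y ^ 2) := (memLp_two_iff_integrable_sq hgL.1).1 hgL
  refine IsLeast.csInf_eq ⟨⟨fun y => (g y : ℂ), hgL.ofReal, ?_⟩, ?_⟩
  · simp only [Complex.ofReal_re, Complex.norm_real, Real.norm_eq_abs, sq_abs, ← pow_two]
    ring
  · rintro r ⟨v, hv, rfl⟩
    have hv2 : Integrable (fun y => ‖v y‖ ^ 2) := (memLp_two_iff_integrable_sq_norm hv.1).1 hv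
    have hvg : Integrable (fun y => (v y).re * g y) := hv.re.integrable_mul hgL
    have hle : 2 * (∫ y, (v y).re * g y) ≤ (∫ y, ‖v y‖ ^ 2) + ∫ y, g y ^ 2 := by
      rw [← integral_const_mul, ← integral_add hv2 hg2]
      refine integral_mono (hvg.const_mul 2) (hv2.add hg2) fun y => ?_
      have h1 : (v y).re ^ 2 ≤ ‖v y‖ ^ 2 := by
        rw [← sq_abs]
        exact pow_le_pow_left₀ (abs_nonneg _) (Complex.abs_re_le_norm _) 2
      simp only [Pi.add_apply]
      nlinarith [sq_nonneg ((v y).re - g y)]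
    linarith
end
end

section
/- There exists u ∈ H¹(ℝ³; ℝ) with ‖u‖_{L²} = 1 such that ℰ(u) < 0, where ℰ(u) := ∫_{ℝ³} |∇u(x)|² dx − (1/(4π)) ∬_{ℝ³×ℝ³} |u(x)|² |u(y)|² / |x−y| dx dy. In particular the Pekar energy e^{Pek} := inf{ ℰ(u) : u ∈ H¹(ℝ³;ℝ), ‖u‖_{L²} = 1 } satisfies e^{Pek} < 0. -/
open MeasureTheory Real

noncomputable section

/-- The electronic Pekar functional
`ℰ(u,u') = ∫|∇u|² − (1/(4π)) ∬ |u(x)|²|u(y)|²/|x−y|`, where `u'` is the weak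
gradient of `u`. -/
def pekarFunctional (u : EuclideanSpace ℝ (Fin 3) → ℝ)
    (u' : Fin 3 → EuclideanSpace ℝ (Fin 3) → ℝ) : ℝ :=
  (∫ x, ∑ i, u' i x ^ 2) -
    (1 / (4 * π)) * ∫ x, ∫ y, u x ^ 2 * u y ^ 2 / ‖x - y‖

/-- `u ∈ H¹(ℝ³;ℝ)` with weak gradient `u'` and `‖u‖_{L²} = 1`. -/
def IsNormalizedH1 (u : EuclideanSpace ℝ (Fin 3) → ℝ)
    (u' : Fin 3 → EuclideanSpace ℝ (Fin 3) → ℝ) : Prop :=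
  MemLp u 2 volume ∧ (∀ i, MemLp (u' i) 2 volume) ∧
    (∀ i, ∀ φ : EuclideanSpace ℝ (Fin 3) → ℝ,
      ContDiff ℝ (⊤ : ℕ∞) φ → HasCompactSupport φ →
      ∫ x, u x * fderiv ℝ φ x (EuclideanSpace.single i 1) = - ∫ x, u' i x * φ x) ∧
    (∫ x, u x ^ 2) = 1

open Filter Topology
open scoped Convolution ContDiff

/-- Three dimensional Euclidean space. -/
abbrev V3 := EuclideanSpace ℝ (Fin 3)

/-- regularized distance -/
def regDist (y : V3) (δ : ℝ) (x : V3) : ℝ := Real.sqrt (‖x - y‖ ^ 2 + δ)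

lemma regDist_pos (y : V3) {δ : ℝ} (hδ : 0 < δ) (x : V3) : 0 < regDist y δ x := by
  unfold regDist; positivity

lemma regDist_sq (y : V3) {δ : ℝ} (hδ : 0 < δ) (x : V3) :
    regDist y δ x ^ 2 = ‖x - y‖ ^ 2 + δ := by
  unfold regDist; exact Real.sq_sqrt (by positivity)

lemma norm_sq_V3 (x y : V3) : ‖x - y‖ ^ 2 = ∑ i, (x i - y i) ^ 2 := by
  rw [EuclideanSpace.real_norm_sq_eq]; simp

lemma continuous_regDist (y : V3) (δ : ℝ) : Continuous (regDist y δ) := by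
  unfold regDist; fun_prop

/-- regularized radial field -/
def regF (y : V3) (δ : ℝ) (i : Fin 3) (x : V3) : ℝ := (x i - y i) / regDist y δ x

lemma contDiff_regF (y : V3) {δ : ℝ} (hδ : 0 < δ) (i : Fin 3) :
    ContDiff ℝ 1 (regF y δ i) := by
  unfold regF
  apply ContDiff.div
  · fun_prop
  · unfold regDist
    apply ContDiff.sqrt
    · exact ((contDiff_id.sub contDiff_const).norm_sq ℝ).add contDiff_const
    · intro x; positivity
  · intro x; exact (regDist_pos y hδ x).ne'

lemma fderiv_regF (y : V3) {δ : ℝ} (hδ : 0 < δ) (i : Fin 3) (x : V3) :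
    fderiv ℝ (regF y δ i) x (EuclideanSpace.single i 1) =
      1 / regDist y δ x - (x i - y i) ^ 2 / regDist y δ x ^ 3 := by
  have hs := regDist_pos y hδ x
  have h0 : HasFDerivAt (fun x : V3 => ‖x - y‖ ^ 2 + δ) ((2 : ℕ) • (innerSL ℝ (x - y))) x := by
    have := ((hasStrictFDerivAt_norm_sq (x - y)).hasFDerivAt).comp x
      ((hasFDerivAt_id x).sub_const y)
    simpa using this.add_const δ
  have h1 : HasFDerivAt (regDist y δ) _ x := h0.sqrt (by positivity)
  have h2 : HasFDerivAt (fun x : V3 => x i - y i) (EuclideanSpace.proj i : V3 →L[ℝ] ℝ) x := by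
    exact ((EuclideanSpace.proj i : V3 →L[ℝ] ℝ).hasFDerivAt).sub_const (y i)
  have h1' := (hasDerivAt_inv (𝕜 := ℝ) hs.ne').comp_hasFDerivAt x h1
  have h3 := HasFDerivAt.mul h2 h1'
  have h4 : regF y δ i = fun x => (x i - y i) * (regDist y δ x)⁻¹ := by
    funext x; rw [regF, div_eq_mul_inv]
  have h5 : fderiv ℝ (fun x : V3 => (x i - y i) * (regDist y δ x)⁻¹) x = _ := h3.fderiv
  rw [h4, h5]
  have e : √(‖x - y‖ ^ 2 + δ) = regDist y δ x := rfl
  rw [e]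
  simp
  field_simp
  have e2 : ∀ z : V3, inner ℝ z (EuclideanSpace.single i (1 : ℝ)) = z i := fun z => by
    rw [EuclideanSpace.inner_single_right]; simp
  rw [e2, e2]
  ring

lemma regF_sq_sum (y : V3) {δ : ℝ} (hδ : 0 < δ) (x : V3) : ∑ i, regF y δ i x ^ 2 ≤ 1 := by
  have hs := regDist_pos y hδ x
  simp only [regF, div_pow]
  rw [← Finset.sum_div, ← norm_sq_V3, regDist_sq y hδ, div_le_one (by positivity)]
  linarith

lemma abs_regF_le (y : V3) {δ : ℝ} (hδ : 0 < δ) (i : Fin 3) (x : V3) : |regF y δ i x| ≤ 1 := by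
  rw [abs_le_one_iff_mul_self_le_one, ← pow_two]
  refine le_trans ?_ (regF_sq_sum y hδ x)
  exact Finset.single_le_sum (f := fun i => regF y δ i x ^ 2) (fun _ _ => sq_nonneg _)
    (Finset.mem_univ i)

lemma abs_fderiv_regF_le (y : V3) {δ : ℝ} (hδ : 0 < δ) (i : Fin 3) (x : V3) :
    |fderiv ℝ (regF y δ i) x (EuclideanSpace.single i 1)| ≤ 1 / √δ := by
  have hs := regDist_pos y hδ x
  have e : fderiv ℝ (regF y δ i) x (EuclideanSpace.single i 1) =
      (1 - regF y δ i x ^ 2) * (1 / regDist y δ x) := by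
    rw [fderiv_regF y hδ, regF]; field_simp
  have h1 : regF y δ i x ^ 2 ≤ 1 := by
    have := abs_regF_le y hδ i x
    rwa [abs_le_one_iff_mul_self_le_one, ← pow_two] at this
  have h2 : 1 / regDist y δ x ≤ 1 / √δ := by
    apply one_div_le_one_div_of_le (by positivity)
    exact Real.sqrt_le_sqrt (by nlinarith [sq_nonneg ‖x - y‖])
  rw [e, abs_of_nonneg (by apply mul_nonneg (by linarith); positivity)]
  have h3 : 0 < 1 / regDist y δ x := by positivity
  nlinarith [sq_nonneg (regF y δ i x)]

lemma div_regF (y : V3) {δ : ℝ} (hδ : 0 < δ) (x : V3) :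
    2 / regDist y δ x ≤ ∑ i, fderiv ℝ (regF y δ i) x (EuclideanSpace.single i 1) := by
  have hs := regDist_pos y hδ x
  have e : ∀ i, fderiv ℝ (regF y δ i) x (EuclideanSpace.single i 1) =
      (1 - regF y δ i x ^ 2) * (1 / regDist y δ x) := by
    intro i; rw [fderiv_regF y hδ, regF]; field_simp
  simp only [e]
  rw [← Finset.sum_mul, div_eq_mul_one_div]
  apply mul_le_mul_of_nonneg_right _ (by positivity)
  have := regF_sq_sum y hδ x
  simp [Finset.sum_sub_distrib] at this ⊢
  linarith

lemma smooth_bound (v : V3 → ℝ) (hv : ContDiff ℝ 1 v) (h2 : MemLp v 2)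
    (h2' : ∀ i, MemLp (fun x => fderiv ℝ v x (EuclideanSpace.single i 1)) 2)
    (y : V3) {δ : ℝ} (hδ : 0 < δ) :
    Integrable (fun x => v x ^ 2 / regDist y δ x) ∧
    ∫ x, v x ^ 2 / regDist y δ x ≤
      ((∫ x, v x ^ 2) + ∑ i, ∫ x, (fderiv ℝ v x (EuclideanSpace.single i 1)) ^ 2) / 2 := by
  have hvd : Differentiable ℝ v := hv.differentiable (by norm_num)
  have hvc : Continuous v := hv.continuous
  have hv'c : ∀ i : Fin 3, Continuous (fun x => fderiv ℝ v x (EuclideanSpace.single i 1)) :=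
    fun i => (hv.continuous_fderiv (by norm_num)).clm_apply continuous_const
  have hFc : ∀ i, Continuous (regF y δ i) := fun i => (contDiff_regF y hδ i).continuous
  have hF'c : ∀ i : Fin 3,
      Continuous (fun x => fderiv ℝ (regF y δ i) x (EuclideanSpace.single i 1)) :=
    fun i => ((contDiff_regF y hδ i).continuous_fderiv (by norm_num)).clm_apply continuous_const
  have Iv : Integrable (fun x => v x ^ 2) := h2.integrable_sq
  have Iv' : ∀ i, Integrable (fun x => (fderiv ℝ v x (EuclideanSpace.single i 1)) ^ 2) :=
    fun i => (h2' i).integrable_sq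
  have I1 : ∀ i, Integrable (fun x => v x ^ 2 * regF y δ i x) := fun i => by
    refine Iv.mono' (by fun_prop) (.of_forall fun x => ?_)
    rw [Real.norm_eq_abs, abs_mul, abs_of_nonneg (sq_nonneg _)]
    exact mul_le_of_le_one_right (sq_nonneg _) (abs_regF_le y hδ i x)
  have I2 : ∀ i, Integrable (fun x => v x ^ 2 *
      fderiv ℝ (regF y δ i) x (EuclideanSpace.single i 1)) := fun i => by
    refine (Iv.mul_const (1 / √δ)).mono'
      ((hvc.pow 2).mul (hF'c i)).aestronglyMeasurable (.of_forall fun x => ?_)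
    rw [Real.norm_eq_abs, abs_mul, abs_of_nonneg (sq_nonneg _)]
    exact mul_le_mul_of_nonneg_left (abs_fderiv_regF_le y hδ i x) (sq_nonneg _)
  have ed : ∀ i x, fderiv ℝ (fun x => v x ^ 2) x (EuclideanSpace.single i 1) =
      2 * v x * fderiv ℝ v x (EuclideanSpace.single i 1) := fun i x => by
    have := ((hvd x).hasFDerivAt.pow 2).fderiv
    rw [this]; simp
  have I3 : ∀ i, Integrable (fun x => fderiv ℝ (fun x => v x ^ 2) x (EuclideanSpace.single i 1)
      * regF y δ i x) := fun i => by
    simp only [ed]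
    refine (Iv.add (Iv' i)).mono' ((((continuous_const.mul hvc).mul (hv'c i)).mul
      (hFc i)).aestronglyMeasurable) (.of_forall fun x => ?_)
    rw [Real.norm_eq_abs, abs_mul]
    refine (mul_le_of_le_one_right (abs_nonneg _) (abs_regF_le y hδ i x)).trans ?_
    simp only [Pi.add_apply]
    rw [abs_le]
    constructor <;> nlinarith [sq_nonneg (v x + fderiv ℝ v x (EuclideanSpace.single i 1)),
      sq_nonneg (v x - fderiv ℝ v x (EuclideanSpace.single i 1))]
  have ibp : ∀ i, ∫ x, v x ^ 2 * fderiv ℝ (regF y δ i) x (EuclideanSpace.single i 1) =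
      - ∫ x, fderiv ℝ (fun x => v x ^ 2) x (EuclideanSpace.single i 1) * regF y δ i x := fun i =>
    integral_mul_fderiv_eq_neg_fderiv_mul_of_integrable (I3 i) (I2 i) (I1 i)
      (fun x _ => (hvd x).pow 2)
      (fun x _ => (contDiff_regF y hδ i).differentiable (by norm_num) x)
  have I4 : Integrable (fun x => v x ^ 2 / regDist y δ x) := by
    refine (Iv.mul_const (1 / √δ)).mono'
      ((hvc.pow 2).div (continuous_regDist y δ)
        (fun x => (regDist_pos y hδ x).ne')).aestronglyMeasurable (.of_forall fun x => ?_)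
    have hs := regDist_pos y hδ x
    rw [Real.norm_eq_abs, abs_of_nonneg (by positivity), div_eq_mul_one_div]
    apply mul_le_mul_of_nonneg_left _ (sq_nonneg _)
    apply one_div_le_one_div_of_le (by positivity)
    exact Real.sqrt_le_sqrt (by nlinarith [sq_nonneg ‖x - y‖])
  refine ⟨I4, ?_⟩
  have A : ∫ x, 2 * (v x ^ 2 / regDist y δ x) ≤
      ∫ x, ∑ i, v x ^ 2 * fderiv ℝ (regF y δ i) x (EuclideanSpace.single i 1) := by
    refine integral_mono (I4.const_mul 2) (integrable_finsetSum _ fun i _ => I2 i) fun x => ?_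
    have := mul_le_mul_of_nonneg_left (div_regF y hδ x) (sq_nonneg (v x))
    rw [Finset.mul_sum] at this
    refine le_trans (le_of_eq ?_) this
    ring
  rw [integral_const_mul, integral_finsetSum _ fun i _ => I2 i] at A
  simp only [ibp] at A
  rw [Finset.sum_neg_distrib, ← integral_finsetSum _ fun i _ => I3 i, ← integral_neg] at A
  have B : ∫ x, -∑ i, fderiv ℝ (fun x => v x ^ 2) x (EuclideanSpace.single i 1) * regF y δ i x
      ≤ ∫ x, (v x ^ 2 + ∑ i, (fderiv ℝ v x (EuclideanSpace.single i 1)) ^ 2) := by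
    refine integral_mono (integrable_finsetSum _ fun i _ => I3 i).neg
      (Iv.add (integrable_finsetSum _ fun i _ => Iv' i)) fun x => ?_
    simp only [ed]
    have h := regF_sq_sum y hδ x
    have h' := mul_le_mul_of_nonneg_left h (sq_nonneg (v x))
    simp only [Fin.sum_univ_three] at h' ⊢
    nlinarith [sq_nonneg (v x * regF y δ 0 x + fderiv ℝ v x (EuclideanSpace.single 0 1)),
      sq_nonneg (v x * regF y δ 1 x + fderiv ℝ v x (EuclideanSpace.single 1 1)),
      sq_nonneg (v x * regF y δ 2 x + fderiv ℝ v x (EuclideanSpace.single 2 1))]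
  rw [integral_add Iv (integrable_finsetSum _ fun i _ => Iv' i),
    integral_finsetSum _ fun i _ => Iv' i] at B
  linarith

/-- mollification -/
def moll (φ : ContDiffBump (0 : V3)) (u : V3 → ℝ) : V3 → ℝ :=
  (φ.normed volume ⋆[ContinuousLinearMap.lsmul ℝ ℝ, volume] u)

lemma moll_apply (φ : ContDiffBump (0 : V3)) (u : V3 → ℝ) (x : V3) :
    moll φ u x = ∫ t, φ.normed volume t * u (x - t) := rfl

lemma moll_apply' (φ : ContDiffBump (0 : V3)) (u : V3 → ℝ) (x : V3) :
    moll φ u x = ∫ t, φ.normed volume (x - t) * u t := by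
  unfold moll; rw [convolution_lsmul_swap]; rfl

lemma locInt (u : V3 → ℝ) (hu : MemLp u 2) : LocallyIntegrable u :=
  hu.locallyIntegrable (by norm_num)

lemma moll_exists (φ : ContDiffBump (0 : V3)) (u : V3 → ℝ) (hu : LocallyIntegrable u) (x : V3) :
    Integrable (fun t => φ.normed volume t * u (x - t)) := by
  have := HasCompactSupport.convolutionExists_left (μ := volume) (ContinuousLinearMap.lsmul ℝ ℝ)
    (φ.hasCompactSupport_normed (μ := volume)) (φ.continuous_normed (μ := volume)) hu x
  exact this

lemma moll_contDiff (φ : ContDiffBump (0 : V3)) (u : V3 → ℝ) (hu : LocallyIntegrable u) :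
    ContDiff ℝ 1 (moll φ u) := by
  have := HasCompactSupport.contDiff_convolution_left (μ := volume) (n := 1)
    (ContinuousLinearMap.lsmul ℝ ℝ)
    (φ.hasCompactSupport_normed (μ := volume)) (φ.contDiff_normed (μ := volume)) hu
  exact this

lemma moll_sq_le (φ : ContDiffBump (0 : V3)) (u : V3 → ℝ) (hu : MemLp u 2) (x : V3) :
    moll φ u x ^ 2 ≤ moll φ (fun x => u x ^ 2) x := by
  have I1 := moll_exists φ u (locInt u hu) x
  have I2 := moll_exists φ (fun x => u x ^ 2) (hu.integrable_sq.locallyIntegrable) x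
  have I0 : Integrable (φ.normed volume) := φ.integrable_normed
  have e0 : ∫ t, φ.normed volume t = 1 := φ.integral_normed
  set m := moll φ u x with hm
  have key : 0 ≤ ∫ t, (φ.normed volume t * u (x - t) ^ 2
      - 2 * m * (φ.normed volume t * u (x - t)) + m ^ 2 * φ.normed volume t) := by
    apply integral_nonneg
    intro t
    have := mul_nonneg (φ.nonneg_normed (μ := volume) t) (sq_nonneg (u (x - t) - m))
    simp only [Pi.zero_apply]
    linarith
  have I3 : Integrable (fun t => φ.normed volume t * u (x - t) ^ 2
      - 2 * m * (φ.normed volume t * u (x - t))) := I2.sub (I1.const_mul _)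
  rw [integral_add I3 (I0.const_mul _), integral_sub I2 (I1.const_mul _), integral_const_mul, integral_const_mul, e0] at key
  rw [← moll_apply, ← hm] at key
  rw [moll_apply]
  linarith

lemma moll_memLp (φ : ContDiffBump (0 : V3)) (u : V3 → ℝ) (hu : MemLp u 2) :
    MemLp (moll φ u) 2 ∧ ∫ x, moll φ u x ^ 2 ≤ ∫ x, u x ^ 2 := by
  have I0 : Integrable (φ.normed volume) := φ.integrable_normed
  have e0 : ∫ t, φ.normed volume t = 1 := φ.integral_normed
  have Ic : Integrable (moll φ (fun x => u x ^ 2)) :=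
    I0.integrable_convolution (ContinuousLinearMap.lsmul ℝ ℝ) hu.integrable_sq
  have hc := (moll_contDiff φ u (locInt u hu)).continuous
  have I2 : Integrable (fun x => moll φ u x ^ 2) := by
    refine Ic.mono' (by fun_prop) (.of_forall fun x => ?_)
    rw [Real.norm_eq_abs, abs_of_nonneg (sq_nonneg _)]
    exact moll_sq_le φ u hu x
  refine ⟨(memLp_two_iff_integrable_sq hc.aestronglyMeasurable).2 I2, ?_⟩
  refine (integral_mono I2 Ic (moll_sq_le φ u hu)).trans ?_
  unfold moll
  rw [integral_convolution (ContinuousLinearMap.lsmul ℝ ℝ) I0 hu.integrable_sq, e0]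
  simp

lemma moll_fderiv (φ : ContDiffBump (0 : V3)) (u w : V3 → ℝ) (hu : LocallyIntegrable u)
    (i : Fin 3)
    (hw : ∀ ψ : V3 → ℝ, ContDiff ℝ (⊤ : ℕ∞) ψ → HasCompactSupport ψ →
      ∫ x, u x * fderiv ℝ ψ x (EuclideanSpace.single i 1) = - ∫ x, w x * ψ x) (x : V3) :
    fderiv ℝ (moll φ u) x (EuclideanSpace.single i 1) = moll φ w x := by
  have hd := HasCompactSupport.hasFDerivAt_convolution_left (μ := volume)
    (ContinuousLinearMap.lsmul ℝ ℝ)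
    (φ.hasCompactSupport_normed (μ := volume)) (φ.contDiff_normed (μ := volume)) hu x
  have hd' : HasFDerivAt (moll φ u) _ x := hd
  rw [hd'.fderiv]
  have hex := HasCompactSupport.convolutionExists_left (μ := volume)
    ((ContinuousLinearMap.lsmul ℝ ℝ : ℝ →L[ℝ] ℝ →L[ℝ] ℝ).precompL V3)
    ((φ.hasCompactSupport_normed (μ := volume)).fderiv ℝ)
    ((φ.contDiff_normed (μ := volume) (n := 1)).continuous_fderiv (by norm_num)) hu x
  rw [convolution_eq_swap, ContinuousLinearMap.integral_apply hex.integrable_swap]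
  have hψ := hw (fun t => φ.normed volume (x - t))
    (φ.contDiff_normed.comp (contDiff_const.sub contDiff_id))
    ((φ.hasCompactSupport_normed (μ := volume)).comp_homeomorph (Homeomorph.subLeft x))
  have e : ∀ t, fderiv ℝ (fun t => φ.normed volume (x - t)) t (EuclideanSpace.single i 1) =
      - fderiv ℝ (φ.normed volume) (x - t) (EuclideanSpace.single i 1) := by
    intro t
    have h1 : DifferentiableAt ℝ (φ.normed volume) (x - t) :=
      (φ.contDiff_normed (μ := volume) (n := 1)).differentiable (by norm_num) _
    have h2 := h1.hasFDerivAt.comp t ((hasFDerivAt_id t).const_sub x)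
    have h3 : HasFDerivAt (fun t => φ.normed volume (x - t)) _ t := h2
    rw [h3.fderiv]; simp
  simp only [e] at hψ
  rw [moll_apply']
  simp only [mul_neg, integral_neg, neg_inj] at hψ
  simp only [mul_comm (φ.normed volume _)]
  rw [← hψ]
  congr 1
  funext t
  simp [ContinuousLinearMap.precompL_apply, mul_comm]

lemma h1_bound (u : V3 → ℝ) (u' : Fin 3 → V3 → ℝ) (h : IsNormalizedH1 u u') (y : V3) :
    ∫⁻ x, ENNReal.ofReal (u x ^ 2 / ‖x - y‖) ≤
      ENNReal.ofReal ((1 + ∫ x, ∑ i, u' i x ^ 2) / 2) := by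
  obtain ⟨hu, hu', hw, h1⟩ := h
  let φ : ℕ → ContDiffBump (0 : V3) := fun n =>
    ⟨1 / ((n : ℝ) + 1), 2 * (1 / ((n : ℝ) + 1)), by positivity, by
      have : 0 < 1 / ((n : ℝ) + 1) := by positivity
      linarith⟩
  have l0 : Tendsto (fun n : ℕ => 1 / ((n : ℝ) + 1)) atTop (𝓝 0) :=
    tendsto_one_div_add_atTop_nhds_zero_nat
  have hconv := ContDiffBump.ae_convolution_tendsto_right_of_locallyIntegrable (μ := volume)
    (φ := φ) (l := atTop) (K := 2) (by simpa [φ] using l0.const_mul 2)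
    (.of_forall fun n => le_rfl) (locInt u hu)
  have hne : ∀ᵐ x : V3, x ≠ y := by
    simp [ae_iff]
  let f : ℕ → V3 → ENNReal := fun n x =>
    ENNReal.ofReal (moll (φ n) u x ^ 2 / regDist y (1 / ((n : ℝ) + 1)) x)
  have hδ : ∀ n : ℕ, 0 < 1 / ((n : ℝ) + 1) := fun n => by positivity
  have hb : ∀ n, Integrable (fun x => moll (φ n) u x ^ 2 / regDist y (1 / ((n : ℝ) + 1)) x) ∧
      ∫ x, moll (φ n) u x ^ 2 / regDist y (1 / ((n : ℝ) + 1)) x ≤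
      (1 + ∫ x, ∑ i, u' i x ^ 2) / 2 := by
    intro n
    have ed : ∀ i, (fun x => fderiv ℝ (moll (φ n) u) x (EuclideanSpace.single i 1)) =
        moll (φ n) (u' i) := fun i => by
      funext x; exact moll_fderiv (φ n) u (u' i) (locInt u hu) i (hw i) x
    have := smooth_bound (moll (φ n) u) (moll_contDiff _ _ (locInt u hu)) (moll_memLp _ _ hu).1
      (fun i => by rw [ed]; exact (moll_memLp _ _ (hu' i)).1) y (hδ n)
    refine ⟨this.1, this.2.trans ?_⟩
    have a1 := (moll_memLp (φ n) u hu).2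
    have a2 : ∑ i, ∫ x, (fderiv ℝ (moll (φ n) u) x (EuclideanSpace.single i 1)) ^ 2 ≤
        ∑ i, ∫ x, u' i x ^ 2 := by
      apply Finset.sum_le_sum
      intro i _
      refine le_trans (le_of_eq ?_) (moll_memLp (φ n) (u' i) (hu' i)).2
      rw [← ed]
    rw [integral_finsetSum _ fun i _ => (hu' i).integrable_sq]
    linarith
  calc ∫⁻ x, ENNReal.ofReal (u x ^ 2 / ‖x - y‖) = ∫⁻ x, liminf (fun n => f n x) atTop := by
        apply lintegral_congr_ae
        filter_upwards [hconv, hne] with x hx hxy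
        symm
        apply Tendsto.liminf_eq
        apply ENNReal.tendsto_ofReal
        refine Tendsto.div (Tendsto.pow hx 2) ?_ (by simpa [sub_eq_zero] using hxy)
        have : Tendsto (fun n : ℕ => √(‖x - y‖ ^ 2 + 1 / ((n : ℝ) + 1))) atTop
            (𝓝 √(‖x - y‖ ^ 2 + 0)) := (tendsto_const_nhds.add l0).sqrt
        simpa [regDist] using this
    _ ≤ liminf (fun n => ∫⁻ x, f n x) atTop :=
        lintegral_liminf_le' fun n => (hb n).1.aestronglyMeasurable.aemeasurable.ennreal_ofReal
    _ ≤ _ := by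
        refine liminf_le_of_frequently_le' (Frequently.of_forall fun n => ?_)
        rw [← ofReal_integral_eq_lintegral_ofReal (hb n).1
          (.of_forall fun x => div_nonneg (sq_nonneg _) (regDist_pos y (hδ n) x).le)]
        exact ENNReal.ofReal_le_ofReal (hb n).2

lemma h1_bound' (u : V3 → ℝ) (u' : Fin 3 → V3 → ℝ) (h : IsNormalizedH1 u u') (x : V3) :
    Integrable (fun y => u y ^ 2 / ‖x - y‖) ∧
    ∫ y, u y ^ 2 / ‖x - y‖ ≤ (1 + ∫ x, ∑ i, u' i x ^ 2) / 2 := by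
  have hb := h1_bound u u' h x
  simp only [norm_sub_rev _ x] at hb
  have hm : AEStronglyMeasurable (fun y => u y ^ 2 / ‖x - y‖) volume := by
    apply AEMeasurable.aestronglyMeasurable
    have := h.1.1.aemeasurable
    fun_prop
  have hnn : 0 ≤ᵐ[volume] (fun y => u y ^ 2 / ‖x - y‖) := .of_forall fun y => by
    simp only [Pi.zero_apply]; positivity
  have hG : 0 ≤ ∫ x, ∑ i, u' i x ^ 2 := integral_nonneg fun x => by
    simp only [Pi.zero_apply]; positivity
  refine ⟨⟨hm, ?_⟩, ?_⟩
  · rw [hasFiniteIntegral_iff_ofReal hnn]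
    exact hb.trans_lt ENNReal.ofReal_lt_top
  · rw [integral_eq_lintegral_of_nonneg_ae hnn hm]
    exact ENNReal.toReal_le_of_le_ofReal (by positivity) hb

lemma inner_eq (u : V3 → ℝ) (x : V3) :
    ∫ y, u x ^ 2 * u y ^ 2 / ‖x - y‖ = u x ^ 2 * ∫ y, u y ^ 2 / ‖x - y‖ := by
  rw [← integral_const_mul]; congr 1; funext y; ring

lemma pekar_lower (u : V3 → ℝ) (u' : Fin 3 → V3 → ℝ) (h : IsNormalizedH1 u u') :
    -1 ≤ pekarFunctional u u' := by
  unfold pekarFunctional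
  set G := ∫ x, ∑ i, u' i x ^ 2 with hGdef
  have hG : 0 ≤ G := integral_nonneg fun x => by
    simp only [Pi.zero_apply]; positivity
  have hD : ∫ x, ∫ y, u x ^ 2 * u y ^ 2 / ‖x - y‖ ≤ (1 + G) / 2 := by
    simp only [inner_eq]
    have : ∫ x, u x ^ 2 * ((1 + G) / 2) = (1 + G) / 2 := by
      rw [integral_mul_const, h.2.2.2, one_mul]
    rw [← this]
    refine integral_mono_of_nonneg (.of_forall fun x => ?_) (h.1.integrable_sq.mul_const _)
      (.of_forall fun x => ?_)
    · exact mul_nonneg (sq_nonneg _) (integral_nonneg fun y => by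
        simp only [Pi.zero_apply]; positivity)
    · exact mul_le_mul_of_nonneg_left (h1_bound' u u' h x).2 (sq_nonneg _)
  have hpi : 1 / (4 * π) ≤ 1 := by
    rw [div_le_one (by positivity)]; nlinarith [Real.pi_gt_three]
  have hpi0 : 0 < 1 / (4 * π) := by positivity
  have := mul_le_mul_of_nonneg_left hD hpi0.le
  nlinarith

lemma pekar_upper (u : V3 → ℝ) (u' : Fin 3 → V3 → ℝ) (h : IsNormalizedH1 u u')
    (R : ℝ) (hR : 0 < R) (hsupp : ∀ x, R < ‖x‖ → u x = 0) :
    pekarFunctional u u' ≤ (∫ x, ∑ i, u' i x ^ 2) - (1 / (4 * π)) * (1 / (2 * R)) := by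
  unfold pekarFunctional
  gcongr
  simp only [inner_eq]
  have e : ∫ x, u x ^ 2 * (1 / (2 * R)) = 1 / (2 * R) := by
    rw [integral_mul_const, h.2.2.2, one_mul]
  have hm : AEStronglyMeasurable (fun x => ∫ y, u y ^ 2 / ‖x - y‖) volume := by
    have h1 : AEMeasurable (fun p : V3 × V3 => u p.2 ^ 2 / ‖p.1 - p.2‖)
        (volume.prod volume) := by
      have h2 : AEMeasurable (fun p : V3 × V3 => u p.2) (volume.prod volume) :=
        h.1.1.aemeasurable.comp_snd
      have h3 : Measurable (fun p : V3 × V3 => ‖p.1 - p.2‖) := by fun_prop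
      exact (h2.pow_const 2).div h3.aemeasurable
    exact h1.aestronglyMeasurable.integral_prod_right'
  rw [← e]
  refine integral_mono (h.1.integrable_sq.mul_const _) ?_ fun x => ?_
  · refine (h.1.integrable_sq.mul_const ((1 + ∫ x, ∑ i, u' i x ^ 2) / 2)).mono'
      ((h.1.1.pow 2).mul hm) (.of_forall fun x => ?_)
    have h0 : 0 ≤ ∫ y, u y ^ 2 / ‖x - y‖ := integral_nonneg fun y => by
        simp only [Pi.zero_apply]; positivity
    rw [Real.norm_eq_abs, abs_of_nonneg (by positivity)]
    exact mul_le_mul_of_nonneg_left (h1_bound' u u' h x).2 (sq_nonneg _)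
  · by_cases hx : R < ‖x‖
    · simp [hsupp x hx]
    · simp only
      apply mul_le_mul_of_nonneg_left _ (sq_nonneg _)
      have e' : ∫ y, u y ^ 2 * (1 / (2 * R)) = 1 / (2 * R) := by
        rw [integral_mul_const, h.2.2.2, one_mul]
      rw [← e']
      have hne : ∀ᵐ y : V3, y ≠ x := by simp [ae_iff]
      refine integral_mono_ae (h.1.integrable_sq.mul_const _) (h1_bound' u u' h x).1 ?_
      filter_upwards [hne] with y hy
      by_cases hy' : R < ‖y‖
      · simp [hsupp y hy']
      · rw [div_eq_mul_one_div (u y ^ 2) ‖x - y‖]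
        apply mul_le_mul_of_nonneg_left _ (sq_nonneg _)
        apply one_div_le_one_div_of_le
        · rw [norm_pos_iff, sub_ne_zero]; exact hy.symm
        · have := norm_sub_le x y
          linarith

/-- Smooth compactly supported functions are in H¹. -/
lemma smooth_H1 (u : V3 → ℝ) (hu : ContDiff ℝ 1 u) (hc : HasCompactSupport u)
    (h1 : ∫ x, u x ^ 2 = 1) :
    IsNormalizedH1 u (fun i x => fderiv ℝ u x (EuclideanSpace.single i 1)) := by
  have hcont : ∀ (φ : V3 → ℝ), ContDiff ℝ 1 φ → ∀ i : Fin 3,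
      Continuous (fun x => fderiv ℝ φ x (EuclideanSpace.single i 1)) :=
    fun φ hφ i => (hφ.continuous_fderiv (by norm_num)).clm_apply continuous_const
  have hcs : ∀ i : Fin 3, HasCompactSupport (fun x => fderiv ℝ u x (EuclideanSpace.single i 1)) :=
    fun i => hc.fderiv_apply ℝ _
  refine ⟨hu.continuous.memLp_of_hasCompactSupport hc, fun i =>
    (hcont u hu i).memLp_of_hasCompactSupport (hcs i), fun i φ hφ hφc => ?_, h1⟩
  have hφ1 : ContDiff ℝ 1 φ := hφ.of_le (by exact_mod_cast le_top)
  apply integral_mul_fderiv_eq_neg_fderiv_mul_of_integrable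
  · exact ((hcont u hu i).mul hφ.continuous).integrable_of_hasCompactSupport hφc.mul_left
  · exact (hu.continuous.mul (hcont φ hφ1 i)).integrable_of_hasCompactSupport hc.mul_right
  · exact (hu.continuous.mul hφ.continuous).integrable_of_hasCompactSupport hc.mul_right
  · exact fun x _ => hu.differentiable (by norm_num) x
  · exact fun x _ => hφ1.differentiable (by norm_num) x

lemma exists_neg : ∃ (u : V3 → ℝ) (u' : Fin 3 → V3 → ℝ),
    IsNormalizedH1 u u' ∧ pekarFunctional u u' < 0 := by
  let f : ContDiffBump (0 : V3) := ⟨1, 2, by norm_num, by norm_num⟩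
  have hf : ContDiff ℝ 1 f := f.contDiff
  set N := ∫ x, f x ^ 2 with hN
  set T := ∫ x, ∑ i, (fderiv ℝ f x (EuclideanSpace.single i 1)) ^ 2 with hT
  have hT0 : 0 ≤ T := integral_nonneg fun x => by
    simp only [Pi.zero_apply]; positivity
  have hN0 : 0 < N := by
    have hc : Continuous (fun x => f x ^ 2) := f.continuous.pow 2
    refine hc.integral_pos_of_hasCompactSupport_nonneg_nonzero
      ?_ (fun x => sq_nonneg _) (x := 0) ?_
    · exact f.hasCompactSupport.comp_left (g := fun t : ℝ => t ^ 2) (by norm_num)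
    · have : f 0 = 1 := f.one_of_mem_closedBall (by simp [f])
      simp [this]
  let R : ℝ := 16 * π * T / N + 1
  have hR : 0 < R := by positivity
  let c : ℝ := √(1 / (N * R ^ 3))
  have hc2 : c ^ 2 = 1 / (N * R ^ 3) := Real.sq_sqrt (by positivity)
  let u : V3 → ℝ := fun x => c * f (R⁻¹ • x)
  have scal : ∀ g : V3 → ℝ, ∫ x, g (R⁻¹ • x) = R ^ 3 * ∫ x, g x := fun g => by
    rw [Measure.integral_comp_inv_smul_of_nonneg volume g hR.le]; simp
  have hu : ContDiff ℝ 1 u :=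
    contDiff_const.mul (hf.comp (contDiff_const_smul R⁻¹))
  have hsupp : ∀ x, 2 * R < ‖x‖ → u x = 0 := fun x hx => by
    have : f (R⁻¹ • x) = 0 := by
      apply f.zero_of_le_dist
      simp only [dist_zero_right, norm_smul, norm_inv, Real.norm_eq_abs, abs_of_pos hR, f]
      rw [inv_mul_eq_div, le_div_iff₀ hR]; exact hx.le
    simp [u, this]
  have hcs : HasCompactSupport u := by
    refine HasCompactSupport.of_support_subset_isCompact (isCompact_closedBall (0 : V3) (2 * R)) ?_
    intro x hx
    by_contra hx'
    exact hx (hsupp x (by simpa using hx'))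
  have h1 : ∫ x, u x ^ 2 = 1 := by
    simp only [u, mul_pow]
    rw [integral_const_mul, scal (fun x => f x ^ 2), hc2, ← hN]
    field_simp
  have hH := smooth_H1 u hu hcs h1
  refine ⟨u, _, hH, (pekar_upper u _ hH (2 * R) (by positivity) hsupp).trans_lt ?_⟩
  have ed : ∀ i x, fderiv ℝ u x (EuclideanSpace.single i 1) =
      c * R⁻¹ * fderiv ℝ f (R⁻¹ • x) (EuclideanSpace.single i 1) := fun i x => by
    have h2 := ((hf.differentiable (by norm_num) (R⁻¹ • x)).hasFDerivAt.comp x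
      ((hasFDerivAt_id x).const_smul R⁻¹)).const_mul c
    have h3 : HasFDerivAt u _ x := h2
    rw [h3.fderiv]; simp [mul_assoc]
  have hTu : ∫ x, ∑ i, (fderiv ℝ u x (EuclideanSpace.single i 1)) ^ 2 = T / (N * R ^ 2) := by
    simp only [ed, mul_pow, ← Finset.mul_sum]
    rw [integral_const_mul, scal (fun x => ∑ i, (fderiv ℝ f x (EuclideanSpace.single i 1)) ^ 2),
      hc2, ← hT]
    field_simp
  rw [hTu]
  have key : 16 * π * T / N < R := by simp [R]
  have : T / (N * R ^ 2) < 1 / (4 * π) * (1 / (2 * (2 * R))) := by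
    rw [div_lt_iff₀ hN0] at key
    rw [← one_div_mul_one_div_rev, ← one_div_mul_one_div_rev, ← one_div_mul_one_div_rev]
    field_simp
    nlinarith
  linarith

/-- There is a normalized `u ∈ H¹(ℝ³;ℝ)` with `ℰ(u) < 0`; in
particular the Pekar energy `e^{Pek} = inf ℰ` is negative. -/
theorem statement5 :
    (∃ (u : EuclideanSpace ℝ (Fin 3) → ℝ)
       (u' : Fin 3 → EuclideanSpace ℝ (Fin 3) → ℝ),
        IsNormalizedH1 u u' ∧ pekarFunctional u u' < 0) ∧
    sInf { e : ℝ | ∃ (u : EuclideanSpace ℝ (Fin 3) → ℝ)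
       (u' : Fin 3 → EuclideanSpace ℝ (Fin 3) → ℝ),
        IsNormalizedH1 u u' ∧ e = pekarFunctional u u' } < 0 := by
  refine ⟨exists_neg, ?_⟩
  obtain ⟨u, u', h, hneg⟩ := exists_neg
  refine lt_of_le_of_lt (csInf_le ⟨-1, ?_⟩ ⟨u, u', h, rfl⟩) hneg
  rintro e ⟨v, v', hv, rfl⟩
  exact pekar_lower v v' hv
end
end

section
/- Let ψ ∈ L²(ℝ³; ℝ) with ‖ψ‖_{L²} = 1, define φ(z) := ∫_{ℝ³} ψ(y)² / (2π² |z−y|²) dy and V^φ(x) := −∫_{ℝ³} φ(y) / (π² |x−y|²) dy (an iterated integral of nonnegative functions, so V^φ(x) ∈ [−∞,0] is well defined). Then there is a constant C > 0 such that for every u ∈ H¹(ℝ³;ℂ): (i) ∫_{ℝ³} V^φ(x)² |u(x)|² dx ≤ C (‖∇u‖²_{L²} + ‖u‖²_{L²}), and (ii) | ∫_{ℝ³} V^φ(x) |u(x)|² dx | ≤ (1/2) ‖∇u‖²_{L²} + C ‖u‖²_{L²}. -/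
open MeasureTheory Real
open scoped ENNReal NNReal

noncomputable section

abbrev E3 := EuclideanSpace ℝ (Fin 3)

lemma aux_jensen {α : Type*} [MeasurableSpace α] (μ : Measure α) (ρ f : α → ℝ≥0∞)
    (hρ : Measurable ρ) (hf : AEMeasurable f μ) :
    (∫⁻ x, ρ x * f x ∂μ) ^ 2 ≤ (∫⁻ x, ρ x ∂μ) * ∫⁻ x, ρ x * f x ^ 2 ∂μ := by
  have hc : (2:ℝ).HolderConjugate 2 := by constructor <;> norm_num
  have h := ENNReal.lintegral_mul_le_Lp_mul_Lq (μ := μ) hc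
    (f := fun x => ρ x ^ (1/2:ℝ)) (g := fun x => ρ x ^ (1/2:ℝ) * f x)
    (hρ.pow_const _).aemeasurable ((hρ.pow_const _).aemeasurable.mul hf)
  have e : ∀ a : ℝ≥0∞, a ^ (1/2:ℝ) * a ^ (1/2:ℝ) = a := by
    intro a
    rw [← ENNReal.rpow_add_of_nonneg _ _ (by norm_num) (by norm_num)]; norm_num
  have e2 : ∀ a : ℝ≥0∞, (a ^ (1/2:ℝ)) ^ 2 = a := fun a => by rw [sq, e]
  have h1 : ∀ x, ((fun x => ρ x ^ (1/2:ℝ)) * (fun x => ρ x ^ (1/2:ℝ) * f x)) x = ρ x * f x := by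
    intro x; simp only [Pi.mul_apply]; rw [← mul_assoc, e]
  simp only [h1, ENNReal.rpow_two, e2, mul_pow] at h
  calc _ ≤ _ := pow_le_pow_left' h 2
    _ = _ := by rw [mul_pow, e2, e2]

lemma aux_A0 : ∫⁻ t : E3, (ENNReal.ofReal (‖t‖ ^ 2 * (‖t‖ ^ 2 + 1)))⁻¹ ≠ ∞ := by
  have hi : Integrable (fun t : E3 => (fun r : ℝ => (r ^ 2 * (r ^ 2 + 1))⁻¹) ‖t‖) volume := by
    rw [integrable_fun_norm_addHaar (volume : Measure E3) (f := fun r : ℝ => (r ^ 2 * (r ^ 2 + 1))⁻¹)]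
    refine (integrable_inv_one_add_sq.integrableOn (s := Set.Ioi 0)).congr_fun ?_ measurableSet_Ioi
    intro r hr
    have hr : 0 < r := hr
    simp only [finrank_euclideanSpace, Fintype.card_fin, smul_eq_mul]
    field_simp
    ring
  have h := hi.lintegral_lt_top
  have : ∀ᵐ t : E3, (ENNReal.ofReal (‖t‖ ^ 2 * (‖t‖ ^ 2 + 1)))⁻¹ = ENNReal.ofReal ((fun r : ℝ => (r ^ 2 * (r ^ 2 + 1))⁻¹) ‖t‖) := by
    filter_upwards [Measure.ae_ne (volume : Measure E3) 0] with t ht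
    have : 0 < ‖t‖ := norm_pos_iff.2 ht
    rw [ENNReal.ofReal_inv_of_pos (by positivity)]
  rw [lintegral_congr_ae this]
  exact h.ne

lemma aux_scale (d : ℝ) (hd : 0 < d) :
    ∫⁻ t : E3, (ENNReal.ofReal (‖t‖ ^ 2 * (‖t‖ ^ 2 + d ^ 2)))⁻¹ =
      (∫⁻ t : E3, (ENNReal.ofReal (‖t‖ ^ 2 * (‖t‖ ^ 2 + 1)))⁻¹) * (ENNReal.ofReal d)⁻¹ := by
  have hm := Measure.map_addHaar_smul (volume : Measure E3) (inv_ne_zero hd.ne')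
  have h1 : ∀ t : E3, (ENNReal.ofReal (‖t‖ ^ 2 * (‖t‖ ^ 2 + d ^ 2)))⁻¹ =
      (ENNReal.ofReal (d ^ 4))⁻¹ * (fun t : E3 => (ENNReal.ofReal (‖t‖ ^ 2 * (‖t‖ ^ 2 + 1)))⁻¹) (d⁻¹ • t) := by
    intro t
    simp only
    rw [← ENNReal.mul_inv (Or.inl (by positivity)) (Or.inl ENNReal.ofReal_ne_top), ← ENNReal.ofReal_mul (by positivity)]
    congr 2
    rw [norm_smul, norm_inv, Real.norm_of_nonneg hd.le]
    field_simp
  simp_rw [h1]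
  rw [lintegral_const_mul' _ _ (by simp; positivity), ← lintegral_map (f := (fun t : E3 => (ENNReal.ofReal (‖t‖ ^ 2 * (‖t‖ ^ 2 + 1)))⁻¹)) (by fun_prop) (by fun_prop), hm,
    lintegral_smul_measure, smul_eq_mul, ← mul_assoc, mul_comm]
  congr 1
  rw [finrank_euclideanSpace, Fintype.card_fin, abs_of_pos (by positivity), ← ENNReal.ofReal_inv_of_pos (by positivity),
    ← ENNReal.ofReal_inv_of_pos (by positivity), ← ENNReal.ofReal_mul (by positivity)]
  congr 1
  field_simp

lemma aux_pt (a b d : ℝ) (ha : 0 ≤ a) (hb : 0 ≤ b) (hd : 0 < d) (h : d ≤ 2 * (a + b)) :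
    (ENNReal.ofReal a)⁻¹ * (ENNReal.ofReal b)⁻¹ ≤
      3 * (ENNReal.ofReal (a * (a + d)))⁻¹ + 3 * (ENNReal.ofReal (b * (b + d)))⁻¹ := by
  rcases ha.eq_or_lt with rfl | ha
  · simp
  rcases hb.eq_or_lt with rfl | hb
  · simp
  have h3 : (3 : ℝ≥0∞) = ENNReal.ofReal 3 := by simp
  rw [h3, ← ENNReal.ofReal_inv_of_pos ha, ← ENNReal.ofReal_inv_of_pos hb,
    ← ENNReal.ofReal_inv_of_pos (by positivity), ← ENNReal.ofReal_inv_of_pos (by positivity),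
    ← ENNReal.ofReal_mul (by positivity), ← ENNReal.ofReal_mul (by positivity), ← ENNReal.ofReal_mul (by positivity),
    ← ENNReal.ofReal_add (by positivity) (by positivity)]
  apply ENNReal.ofReal_le_ofReal
  have e : a⁻¹ * b⁻¹ = a⁻¹ * (a + b)⁻¹ + b⁻¹ * (a + b)⁻¹ := by field_simp; ring
  rw [e, mul_inv, mul_inv]
  have k1 : (a + b)⁻¹ ≤ 3 * (a + d)⁻¹ := by
    rw [inv_le_comm₀ (by positivity) (by positivity), mul_inv, inv_inv]; linarith
  have k2 : (a + b)⁻¹ ≤ 3 * (b + d)⁻¹ := by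
    rw [inv_le_comm₀ (by positivity) (by positivity), mul_inv, inv_inv]; linarith
  have := mul_le_mul_of_nonneg_left k1 (inv_nonneg.2 ha.le)
  have := mul_le_mul_of_nonneg_left k2 (inv_nonneg.2 hb.le)
  linarith

lemma aux_kernel : ∃ A : ℝ≥0∞, A ≠ ∞ ∧ ∀ x w : E3,
    ∫⁻ y : E3, (ENNReal.ofReal (‖y - w‖ ^ 2))⁻¹ * (ENNReal.ofReal (‖x - y‖ ^ 2))⁻¹ ≤
      A * (ENNReal.ofReal ‖x - w‖)⁻¹ := by
  refine ⟨6 * (∫⁻ t : E3, (ENNReal.ofReal (‖t‖ ^ 2 * (‖t‖ ^ 2 + 1)))⁻¹) + 1, ?_, ?_⟩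
  · have := aux_A0
    exact ENNReal.add_ne_top.2 ⟨ENNReal.mul_ne_top (by simp) this, by simp⟩
  intro x w
  rcases eq_or_ne x w with rfl | hxw
  · simp
  have hd : 0 < ‖x - w‖ := norm_pos_iff.2 (sub_ne_zero.2 hxw)
  set d := ‖x - w‖ with hdd
  calc _ ≤ ∫⁻ y : E3, (3 * (ENNReal.ofReal (‖y - w‖ ^ 2 * (‖y - w‖ ^ 2 + d ^ 2)))⁻¹ + 3 * (ENNReal.ofReal (‖x - y‖ ^ 2 * (‖x - y‖ ^ 2 + d ^ 2)))⁻¹) := by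
        apply lintegral_mono
        intro y
        apply aux_pt _ _ _ (by positivity) (by positivity) (by positivity)
        have : d ≤ ‖x - y‖ + ‖y - w‖ := by
          rw [hdd]; exact norm_sub_le_norm_sub_add_norm_sub x y w
        nlinarith [sq_nonneg (‖x - y‖ - ‖y - w‖), norm_nonneg (x-y), norm_nonneg (y - w)]
    _ = 6 * ∫⁻ t : E3, (ENNReal.ofReal (‖t‖ ^ 2 * (‖t‖ ^ 2 + d ^ 2)))⁻¹ := by
        rw [lintegral_add_left (by fun_prop), lintegral_const_mul' _ _ (by simp), lintegral_const_mul' _ _ (by simp),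
          lintegral_sub_right_eq_self (fun t : E3 => (ENNReal.ofReal (‖t‖ ^ 2 * (‖t‖ ^ 2 + d ^ 2)))⁻¹),
          lintegral_sub_left_eq_self (fun t : E3 => (ENNReal.ofReal (‖t‖ ^ 2 * (‖t‖ ^ 2 + d ^ 2)))⁻¹), ← add_mul]
        norm_num
    _ ≤ _ := by
        rw [aux_scale d hd, ← mul_assoc]
        gcongr
        exact le_self_add

lemma aux_hardy_delta (v : E3 → ℂ) (hv : ContDiff ℝ 1 v) (hv2 : MemLp v 2 volume)
    (hd : ∀ i : Fin 3, MemLp (fun x => fderiv ℝ v x (EuclideanSpace.single i 1)) 2 volume)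
    (a : E3) (δ : ℝ) (hδ : 0 < δ) :
    Integrable (fun x => ‖v x‖ ^ 2 * (‖x - a‖ ^ 2 + δ)⁻¹) volume ∧
    ∫ x, ‖v x‖ ^ 2 * (‖x - a‖ ^ 2 + δ)⁻¹ ≤
      4 * ∫ x, ∑ i : Fin 3, ‖fderiv ℝ v x (EuclideanSpace.single i 1)‖ ^ 2 := by
  set G : E3 → ℝ := fun x => (‖x - a‖ ^ 2 + δ)⁻¹ with hG
  have hpos : ∀ x : E3, 0 < ‖x - a‖ ^ 2 + δ := fun x => by positivity
  have hG0 : ∀ x, 0 < G x := fun x => inv_pos.2 (hpos x)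
  have hGb : ∀ x, G x ≤ δ⁻¹ := fun x => by
    apply inv_anti₀ hδ; nlinarith [sq_nonneg ‖x - a‖]
  have hGm : ∀ x, ‖x - a‖ ^ 2 * G x ≤ 1 := fun x => by
    simp only [hG]; rw [← div_eq_mul_inv, div_le_one (hpos x)]; linarith
  have hnorm : ∀ x : E3, ‖x - a‖ ^ 2 = ∑ i, (x i - a i) ^ 2 := fun x => by
    rw [EuclideanSpace.norm_sq_eq]; simp
  have hGd : ∀ x, HasFDerivAt G (-(G x ^ 2) • (2 • (innerSL ℝ) (x - a) ∘SL (ContinuousLinearMap.id ℝ E3))) x := by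
    intro x
    have h1 : HasFDerivAt (fun x : E3 => ‖x - a‖ ^ 2 + δ) (2 • (innerSL ℝ) (x - a) ∘SL (ContinuousLinearMap.id ℝ E3)) x :=
      (((hasFDerivAt_id x).sub_const a).norm_sq).add_const δ
    have h2 := (hasDerivAt_inv (hpos x).ne').comp_hasFDerivAt x h1
    have e : -(G x ^ 2) = -((‖x - a‖ ^ 2 + δ) ^ 2)⁻¹ := by simp only [hG, inv_pow]
    rw [e]
    exact h2
  have hGc : Continuous G := by
    simp only [hG]
    exact Continuous.inv₀ (by fun_prop) (fun x => (hpos x).ne')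
  set F : Fin 3 → E3 → ℝ := fun i x => (x i - a i) * G x with hF
  have hcoord : ∀ (i : Fin 3) (x : E3), HasFDerivAt (fun x : E3 => x i - a i) (EuclideanSpace.proj i : E3 →L[ℝ] ℝ) x := by
    intro i x
    exact ((EuclideanSpace.proj i : E3 →L[ℝ] ℝ).hasFDerivAt).sub_const _
  have hFd : ∀ i x, HasFDerivAt (F i) ((x i - a i) • (-(G x ^ 2) • (2 • (innerSL ℝ) (x - a) ∘SL (ContinuousLinearMap.id ℝ E3))) + G x • (EuclideanSpace.proj i : E3 →L[ℝ] ℝ)) x := 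
    fun i x => (hcoord i x).mul (hGd x)
  have hFv : ∀ i x, fderiv ℝ (F i) x (EuclideanSpace.single i 1) = G x - 2 * (x i - a i) ^ 2 * G x ^ 2 := by
    intro i x
    rw [(hFd i x).fderiv]
    have e : inner ℝ (x - a) (EuclideanSpace.single i (1:ℝ)) = x i - a i := by
      rw [EuclideanSpace.inner_single_right]; simp
    simp only [add_apply, smul_apply, ContinuousLinearMap.comp_apply,
      ContinuousLinearMap.id_apply, innerSL_apply_apply, e, smul_eq_mul, nsmul_eq_mul]
    simp
    ring
  have hFc : ∀ i, Continuous (F i) := fun i => by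
    simp only [hF]; fun_prop
  have hFs : ∀ x, ∑ i, F i x ^ 2 ≤ G x := fun x => by
    simp only [hF, mul_pow, ← Finset.sum_mul, ← hnorm]
    nlinarith [hGm x, hG0 x]
  have hF1 : ∀ i x, F i x ^ 2 ≤ G x := fun i x =>
    (Finset.single_le_sum (f := fun i => F i x ^ 2) (fun j _ => sq_nonneg _) (Finset.mem_univ i)).trans (hFs x)
  have hFb : ∀ i x, |F i x| ≤ δ⁻¹ + 1 := fun i x => by
    refine abs_le_of_sq_le_sq ?_ (by positivity)
    nlinarith [hF1 i x, hGb x, inv_pos.2 hδ]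
  have hFdb : ∀ i x, |G x - 2 * (x i - a i) ^ 2 * G x ^ 2| ≤ δ⁻¹ + 1 + 2 * δ⁻¹ := fun i x => by
    have e : G x - 2 * (x i - a i) ^ 2 * G x ^ 2 = G x - 2 * F i x ^ 2 := by simp only [hF]; ring
    rw [e, abs_le]
    constructor <;> nlinarith [hF1 i x, hGb x, inv_pos.2 hδ, hG0 x, sq_nonneg (F i x)]
  -- v side
  set N : E3 → ℝ := fun x => ‖v x‖ ^ 2 with hN
  set D : Fin 3 → E3 → ℂ := fun i x => fderiv ℝ v x (EuclideanSpace.single i 1) with hD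
  have hvd : Differentiable ℝ v := hv.differentiable (by norm_num)
  have hNd : ∀ x, HasFDerivAt N (2 • (innerSL ℝ) (v x) ∘SL (fderiv ℝ v x)) x := fun x =>
    (hvd x).hasFDerivAt.norm_sq
  have hNv : ∀ i x, fderiv ℝ N x (EuclideanSpace.single i 1) = 2 * inner ℝ (v x) (D i x) := by
    intro i x
    rw [(hNd x).fderiv]
    simp only [smul_apply, ContinuousLinearMap.comp_apply,
      innerSL_apply_apply, smul_eq_mul, nsmul_eq_mul, hD]
    simp
  have hvc : Continuous v := hv.continuous
  have hDc : ∀ i, Continuous (D i) := fun i => by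
    have := hv.continuous_fderiv (by norm_num)
    simp only [hD]; fun_prop
  have hNi : Integrable N volume := hv2.integrable_norm_pow (by norm_num)
  have hDi : ∀ i, Integrable (fun x => ‖D i x‖ ^ 2) volume := fun i => (hd i).integrable_norm_pow (by norm_num)
  have hinner : ∀ i x, |inner ℝ (v x) (D i x)| ≤ ‖v x‖ * ‖D i x‖ := fun i x => abs_real_inner_le_norm _ _
  have i1 : ∀ i, Integrable (fun x => fderiv ℝ N x (EuclideanSpace.single i 1) * F i x) volume := by
    intro i
    simp only [hNv]
    refine (((hNi.add (hDi i)).const_mul (δ⁻¹ + 1))).mono' ?_ (Filter.Eventually.of_forall fun x => ?_)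
    · have := hFc i; have := hDc i
      exact Continuous.aestronglyMeasurable (by fun_prop)
    · rw [norm_mul, norm_mul, Real.norm_eq_abs, Real.norm_eq_abs, Real.norm_eq_abs, mul_comm]
      apply mul_le_mul (hFb i x) _ (by positivity) (by positivity)
      simp only [Pi.add_apply, hN]
      have := hinner i x
      rw [abs_of_pos (by norm_num : (0:ℝ) < 2)]
      nlinarith [sq_nonneg (‖v x‖ - ‖D i x‖)]
  have i2 : ∀ i, Integrable (fun x => N x * fderiv ℝ (F i) x (EuclideanSpace.single i 1)) volume := by
    intro i
    simp only [hFv]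
    refine (hNi.const_mul (δ⁻¹ + 1 + 2 * δ⁻¹)).mono' ?_ (Filter.Eventually.of_forall fun x => ?_)
    · exact Continuous.aestronglyMeasurable (by fun_prop)
    · rw [norm_mul, Real.norm_eq_abs, Real.norm_eq_abs, mul_comm]
      apply mul_le_mul (hFdb i x) _ (by positivity) (by positivity)
      exact (abs_of_nonneg (by positivity)).le
  have i3 : ∀ i, Integrable (fun x => N x * F i x) volume := by
    intro i
    refine (hNi.const_mul (δ⁻¹ + 1)).mono' ?_ (Filter.Eventually.of_forall fun x => ?_)
    · have := hFc i
      exact Continuous.aestronglyMeasurable (by fun_prop)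
    · rw [norm_mul, Real.norm_eq_abs, Real.norm_eq_abs, mul_comm]
      apply mul_le_mul (hFb i x) _ (by positivity) (by positivity)
      exact (abs_of_nonneg (by positivity)).le
  have i4 : Integrable (fun x => N x * G x) volume := by
    refine (hNi.const_mul (δ⁻¹)).mono' ?_ (Filter.Eventually.of_forall fun x => ?_)
    · exact Continuous.aestronglyMeasurable (by fun_prop)
    · rw [norm_mul, Real.norm_eq_abs, Real.norm_eq_abs, mul_comm, abs_of_pos (hG0 x)]
      apply mul_le_mul (hGb x) _ (by positivity) (by positivity)
      exact (abs_of_nonneg (by positivity)).le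
  have ibp : ∀ i, ∫ x, N x * fderiv ℝ (F i) x (EuclideanSpace.single i 1) = - ∫ x, fderiv ℝ N x (EuclideanSpace.single i 1) * F i x := fun i =>
    integral_mul_fderiv_eq_neg_fderiv_mul_of_integrable (i1 i) (i2 i) (i3 i)
      (fun x _ => (hNd x).differentiableAt) (fun x _ => (hFd i x).differentiableAt)
  have hsum : ∫ x, ∑ i, N x * fderiv ℝ (F i) x (EuclideanSpace.single i 1) = ∫ x, ∑ i, -(fderiv ℝ N x (EuclideanSpace.single i 1) * F i x) := by
    rw [integral_finsetSum _ (fun i _ => i2 i), integral_finsetSum _ (fun i _ => (i1 i).fun_neg)]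
    simp_rw [integral_neg, ibp]
  have low : ∫ x, N x * G x ≤ ∫ x, ∑ i, N x * fderiv ℝ (F i) x (EuclideanSpace.single i 1) := by
    apply integral_mono i4 (integrable_finsetSum _ (fun i _ => i2 i))
    intro x
    simp only [hFv, ← Finset.mul_sum, Finset.sum_sub_distrib, ← Finset.sum_mul, ← hnorm]
    apply mul_le_mul_of_nonneg_left _ (by positivity)
    simp
    nlinarith [hGm x, hG0 x]
  have iD : Integrable (fun x => ∑ i : Fin 3, ‖D i x‖ ^ 2) volume := integrable_finsetSum _ (fun i _ => hDi i)
  have up : ∫ x, ∑ i, -(fderiv ℝ N x (EuclideanSpace.single i 1) * F i x) ≤ ∫ x, ((1/2) * (N x * G x) + 2 * ∑ i, ‖D i x‖ ^ 2) := by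
    apply integral_mono (integrable_finsetSum _ (fun i _ => (i1 i).neg)) ((i4.const_mul _).add (iD.const_mul _))
    intro x
    simp only [hNv]
    have : ∀ i : Fin 3, -(2 * inner ℝ (v x) (D i x) * F i x) ≤ (1/2) * (N x * F i x ^ 2) + 2 * ‖D i x‖ ^ 2 := by
      intro i
      have h1 : -(2 * inner ℝ (v x) (D i x) * F i x) ≤ 2 * (‖v x‖ * ‖D i x‖) * |F i x| := by
        rw [← neg_mul, ← mul_neg]
        calc _ ≤ |2 * -inner ℝ (v x) (D i x) * F i x| := le_abs_self _
          _ = 2 * |inner ℝ (v x) (D i x)| * |F i x| := by rw [abs_mul, abs_mul, abs_neg]; simp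
          _ ≤ _ := by gcongr; exact hinner i x
      simp only [hN]
      rw [← sq_abs (F i x)]
      nlinarith [sq_nonneg (‖v x‖ * |F i x| - 2 * ‖D i x‖)]
    calc _ ≤ ∑ i : Fin 3, ((1/2) * (N x * F i x ^ 2) + 2 * ‖D i x‖ ^ 2) := Finset.sum_le_sum fun i _ => this i
      _ = (1/2) * (N x * ∑ i, F i x ^ 2) + 2 * ∑ i, ‖D i x‖ ^ 2 := by
        rw [Finset.sum_add_distrib, Finset.mul_sum, Finset.mul_sum, Finset.mul_sum]
      _ ≤ _ := by
        have := mul_le_mul_of_nonneg_left (hFs x) (show 0 ≤ N x by positivity)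
        exact add_le_add (mul_le_mul_of_nonneg_left this (by norm_num)) le_rfl
  rw [integral_add (i4.const_mul _) (iD.const_mul _), integral_const_mul, integral_const_mul] at up
  refine ⟨i4, ?_⟩
  linarith

lemma aux_conv {f : E3 → ℂ} (hf : MemLp f 2 volume) :
    ∫⁻ x, ‖f x‖ₑ ^ 2 = ENNReal.ofReal (∫ x, ‖f x‖ ^ 2) := by
  rw [ofReal_integral_eq_lintegral_ofReal (hf.integrable_norm_pow (by norm_num))
    (Filter.Eventually.of_forall fun x => by positivity)]
  apply lintegral_congr
  intro x
  rw [ENNReal.ofReal_pow (norm_nonneg _), ofReal_norm]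

lemma aux_hardy_smooth (v : E3 → ℂ) (hv : ContDiff ℝ 1 v) (hv2 : MemLp v 2 volume)
    (hd : ∀ i : Fin 3, MemLp (fun x => fderiv ℝ v x (EuclideanSpace.single i 1)) 2 volume)
    (a : E3) :
    ∫⁻ x, ‖v x‖ₑ ^ 2 * (ENNReal.ofReal (‖x - a‖ ^ 2))⁻¹ ≤
      4 * ∑ i : Fin 3, ∫⁻ x, ‖fderiv ℝ v x (EuclideanSpace.single i 1)‖ₑ ^ 2 := by
  have hvc := hv.continuous
  have key : ∀ n : ℕ, ∫⁻ x, ‖v x‖ₑ ^ 2 * (ENNReal.ofReal (‖x - a‖ ^ 2 + 1 / ((n:ℝ) + 1)))⁻¹ ≤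
      4 * ∑ i : Fin 3, ∫⁻ x, ‖fderiv ℝ v x (EuclideanSpace.single i 1)‖ₑ ^ 2 := by
    intro n
    have hn : (0:ℝ) < 1 / ((n:ℝ) + 1) := by positivity
    obtain ⟨h1, h2⟩ := aux_hardy_delta v hv hv2 hd a _ hn
    have e : ∀ x, ‖v x‖ₑ ^ 2 * (ENNReal.ofReal (‖x - a‖ ^ 2 + 1 / ((n:ℝ) + 1)))⁻¹ =
        ENNReal.ofReal (‖v x‖ ^ 2 * (‖x - a‖ ^ 2 + 1 / ((n:ℝ) + 1))⁻¹) := by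
      intro x
      rw [ENNReal.ofReal_mul (by positivity), ENNReal.ofReal_pow (norm_nonneg _), ofReal_norm,
        ENNReal.ofReal_inv_of_pos (by positivity)]
    simp_rw [e]
    rw [← ofReal_integral_eq_lintegral_ofReal h1 (Filter.Eventually.of_forall fun x => by positivity)]
    refine (ENNReal.ofReal_le_ofReal h2).trans (le_of_eq ?_)
    rw [ENNReal.ofReal_mul (by norm_num), integral_finsetSum _ (fun i _ => (hd i).integrable_norm_pow (by norm_num)),
      ENNReal.ofReal_sum_of_nonneg (fun i _ => integral_nonneg fun x => by positivity)]
    simp_rw [aux_conv (hd _)]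
    simp
  have hlim : ∀ x, Filter.Tendsto (fun n : ℕ => ‖v x‖ₑ ^ 2 * (ENNReal.ofReal (‖x - a‖ ^ 2 + 1 / ((n:ℝ) + 1)))⁻¹)
      Filter.atTop (nhds (‖v x‖ₑ ^ 2 * (ENNReal.ofReal (‖x - a‖ ^ 2))⁻¹)) := by
    intro x
    apply ENNReal.Tendsto.const_mul _ (Or.inr (by simp))
    apply tendsto_inv_iff.2
    apply (ENNReal.continuous_ofReal.tendsto _).comp
    simpa using (tendsto_one_div_add_atTop_nhds_zero_nat (𝕜 := ℝ)).const_add (‖x - a‖ ^ 2)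
  calc _ = ∫⁻ x, Filter.liminf (fun n : ℕ => ‖v x‖ₑ ^ 2 * (ENNReal.ofReal (‖x - a‖ ^ 2 + 1 / ((n:ℝ) + 1)))⁻¹) Filter.atTop :=
        lintegral_congr fun x => (hlim x).liminf_eq.symm
    _ ≤ _ := lintegral_liminf_le (fun n => by fun_prop)
    _ ≤ _ := Filter.liminf_le_of_le (by isBoundedDefault) (fun b hb => by
        obtain ⟨n, hn⟩ := hb.exists
        exact hn.trans (key n))

open scoped Convolution in
lemma aux_young (η : E3 → ℝ) (hη : Continuous η) (hη1 : ∫⁻ x, ‖η x‖ₑ = 1) (f : E3 → ℂ)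
    (hf : AEStronglyMeasurable f volume) :
    ∫⁻ x, ‖(η ⋆[ContinuousLinearMap.lsmul ℝ ℝ, volume] f) x‖ₑ ^ 2 ≤ ∫⁻ x, ‖f x‖ₑ ^ 2 := by
  set g := hf.mk f with hg
  have hgm : Measurable g := hf.stronglyMeasurable_mk.measurable
  have hfg : f =ᵐ[volume] g := hf.ae_eq_mk
  rw [convolution_congr (L := ContinuousLinearMap.lsmul ℝ ℝ) (Filter.EventuallyEq.refl _ η) hfg]
  have hr : ∫⁻ x, ‖f x‖ₑ ^ 2 = ∫⁻ x, ‖g x‖ₑ ^ 2 := lintegral_congr_ae (by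
    filter_upwards [hfg] with x hx
    rw [hx])
  rw [hr]
  calc _ ≤ ∫⁻ x, ∫⁻ t, ‖η t‖ₑ * ‖g (x - t)‖ₑ ^ 2 := by
        apply lintegral_mono
        intro x
        have h1 : ‖(η ⋆[ContinuousLinearMap.lsmul ℝ ℝ, volume] g) x‖ₑ ≤ ∫⁻ t, ‖η t‖ₑ * ‖g (x - t)‖ₑ := by
          rw [convolution_def]
          refine (enorm_integral_le_lintegral_enorm _).trans (le_of_eq ?_)
          apply lintegral_congr
          intro t
          rw [ContinuousLinearMap.lsmul_apply, enorm_smul]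
        refine (pow_le_pow_left' h1 2).trans ?_
        refine (aux_jensen volume (fun t => ‖η t‖ₑ) (fun t => ‖g (x - t)‖ₑ) (by fun_prop) (by fun_prop)).trans ?_
        rw [hη1, one_mul]
    _ = ∫⁻ t, ∫⁻ x, ‖η t‖ₑ * ‖g (x - t)‖ₑ ^ 2 := lintegral_lintegral_swap (by
        have hηm : Measurable η := hη.measurable
        apply Measurable.aemeasurable
        unfold Function.uncurry
        fun_prop)
    _ = ∫⁻ t, ‖η t‖ₑ * ∫⁻ x, ‖g x‖ₑ ^ 2 := by
        apply lintegral_congr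
        intro t
        rw [lintegral_const_mul' _ _ (by simp), lintegral_sub_right_eq_self (fun x => ‖g x‖ₑ ^ 2)]
    _ = _ := by
        rw [lintegral_mul_const _ (by fun_prop), hη1, one_mul]

open scoped Convolution in
lemma aux_fderiv (η : E3 → ℝ) (hη : ContDiff ℝ (⊤ : ℕ∞) η) (hc : HasCompactSupport η)
    (u u' : E3 → ℂ) (i : Fin 3) (hu : LocallyIntegrable u volume)
    (hw : ∀ φ : E3 → ℝ,
        ContDiff ℝ (⊤ : ℕ∞) φ → HasCompactSupport φ →
        ∫ x, u x * (fderiv ℝ φ x (EuclideanSpace.single i 1) : ℂ) =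
          - ∫ x, u' x * (φ x : ℂ)) (x : E3) :
    fderiv ℝ (η ⋆[ContinuousLinearMap.lsmul ℝ ℝ, volume] u) x (EuclideanSpace.single i 1) =
      (η ⋆[ContinuousLinearMap.lsmul ℝ ℝ, volume] u') x := by
  have h1 := hc.hasFDerivAt_convolution_left (ContinuousLinearMap.lsmul ℝ ℝ : ℝ →L[ℝ] ℂ →L[ℝ] ℂ) (μ := volume)
    (hη.of_le (by exact_mod_cast le_top)) hu x
  rw [h1.fderiv]
  have hd : ∀ y, HasFDerivAt (fun y => η (x - y)) (-(fderiv ℝ η (x - y))) y := by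
    intro y
    have := ((hη.differentiable (by simp)) (x - y)).hasFDerivAt.comp y ((hasFDerivAt_id y).const_sub x)
    have e : fderiv ℝ η (x - y) ∘SL (-ContinuousLinearMap.id ℝ E3) = -(fderiv ℝ η (x - y)) := by
      ext z; simp
    rw [← e]
    exact this
  have h2 := hw (fun y => η (x - y)) (hη.comp (by fun_prop)) (hc.comp_homeomorph (Homeomorph.subLeft x))
  simp_rw [(hd _).fderiv] at h2
  rw [convolution_eq_swap, convolution_eq_swap]
  have hInt : Integrable (fun t => ContinuousLinearMap.precompL E3 (ContinuousLinearMap.lsmul ℝ ℝ : ℝ →L[ℝ] ℂ →L[ℝ] ℂ) (fderiv ℝ η (x - t)) (u t)) volume := by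
    have := (hc.fderiv ℝ).convolutionExists_left (ContinuousLinearMap.precompL E3 (ContinuousLinearMap.lsmul ℝ ℝ : ℝ →L[ℝ] ℂ →L[ℝ] ℂ)) (hη.continuous_fderiv (by simp)) hu x
    exact this.integrable_swap
  rw [ContinuousLinearMap.integral_apply hInt]
  simp only [ContinuousLinearMap.precompL_apply, ContinuousLinearMap.lsmul_apply]
  have e1 : ∀ t, (fderiv ℝ η (x - t)) (EuclideanSpace.single i 1) • u t = -(u t * (((-(fderiv ℝ η (x - t))) (EuclideanSpace.single i 1) : ℝ) : ℂ)) := by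
    intro t
    simp [mul_comm]
  simp_rw [e1]
  rw [integral_neg, h2, neg_neg]
  apply integral_congr_ae
  filter_upwards with t
  simp [mul_comm]

lemma aux_memLp {f : E3 → ℂ} (hf : AEStronglyMeasurable f volume) (h : ∫⁻ x, ‖f x‖ₑ ^ 2 ≠ ∞) :
    MemLp f 2 volume := by
  refine ⟨hf, ?_⟩
  rw [eLpNorm_lt_top_iff_lintegral_rpow_enorm_lt_top (by simp) (by simp)]
  simpa using h.lt_top

open scoped Convolution in
lemma aux_hardy_weak (u : E3 → ℂ) (u' : Fin 3 → E3 → ℂ)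
    (hu : MemLp u 2 volume) (hu' : ∀ i, MemLp (u' i) 2 volume)
    (hw : ∀ i, ∀ φ : E3 → ℝ,
        ContDiff ℝ (⊤ : ℕ∞) φ → HasCompactSupport φ →
        ∫ x, u x * (fderiv ℝ φ x (EuclideanSpace.single i 1) : ℂ) =
          - ∫ x, u' i x * (φ x : ℂ)) (a : E3) :
    ∫⁻ x, ‖u x‖ₑ ^ 2 * (ENNReal.ofReal (‖x - a‖ ^ 2))⁻¹ ≤ 4 * ∑ i, ∫⁻ x, ‖u' i x‖ₑ ^ 2 := by
  let φ : ℕ → ContDiffBump (0 : E3) := fun n =>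
    ⟨1 / ((n:ℝ) + 1), 2 * (1 / ((n:ℝ) + 1)), by positivity, by
      have : (0:ℝ) < 1 / ((n:ℝ) + 1) := by positivity
      linarith⟩
  have hφ : Filter.Tendsto (fun n => (φ n).rOut) Filter.atTop (nhds 0) := by
    have h := (tendsto_one_div_add_atTop_nhds_zero_nat (𝕜 := ℝ)).const_mul 2
    rw [mul_zero] at h
    exact h
  have hul : LocallyIntegrable u volume := hu.locallyIntegrable (by norm_num)
  have hul' : ∀ i, LocallyIntegrable (u' i) volume := fun i => (hu' i).locallyIntegrable (by norm_num)
  have hlim := ContDiffBump.ae_convolution_tendsto_right_of_locallyIntegrable (μ := (volume : Measure E3)) (φ := φ) (K := 2) hφ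
    (Filter.Eventually.of_forall fun n => le_rfl) hul
  set η : ℕ → E3 → ℝ := fun n => (φ n).normed volume with hη
  have ηs : ∀ n, ContDiff ℝ (⊤ : ℕ∞) (η n) := fun n => (φ n).contDiff_normed
  have ηc : ∀ n, HasCompactSupport (η n) := fun n => (φ n).hasCompactSupport_normed
  have η1 : ∀ n, ∫⁻ x, ‖η n x‖ₑ = 1 := fun n => by
    have h1 : ∀ x, ‖η n x‖ₑ = ENNReal.ofReal (η n x) := fun x =>
      Real.enorm_of_nonneg ((φ n).nonneg_normed x)
    simp_rw [h1]
    rw [← ofReal_integral_eq_lintegral_ofReal (φ n).integrable_normed (Filter.Eventually.of_forall fun x => (φ n).nonneg_normed x),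
      (φ n).integral_normed]
    simp
  set v : ℕ → E3 → ℂ := fun n => (η n ⋆[ContinuousLinearMap.lsmul ℝ ℝ, volume] u) with hv
  have vs : ∀ n, ContDiff ℝ 1 (v n) := fun n => 
    ((ηc n).contDiff_convolution_left (n := 1) (ContinuousLinearMap.lsmul ℝ ℝ : ℝ →L[ℝ] ℂ →L[ℝ] ℂ) ((ηs n).of_le (by exact_mod_cast le_top)) hul)
  have fin : ∀ f : E3 → ℂ, MemLp f 2 volume → ∫⁻ x, ‖f x‖ₑ ^ 2 ≠ ∞ := fun f hf => by
    rw [aux_conv hf]; simp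
  have vm : ∀ n, MemLp (v n) 2 volume := fun n =>
    aux_memLp (vs n).continuous.aestronglyMeasurable
      (ne_top_of_le_ne_top (fin u hu) (aux_young (η n) (ηs n).continuous (η1 n) u hu.1))
  have vd : ∀ n i x, fderiv ℝ (v n) x (EuclideanSpace.single i 1) = (η n ⋆[ContinuousLinearMap.lsmul ℝ ℝ, volume] (u' i)) x :=
    fun n i x => aux_fderiv (η n) (ηs n) (ηc n) u (u' i) i hul (hw i) x
  have vy : ∀ n i, ∫⁻ x, ‖fderiv ℝ (v n) x (EuclideanSpace.single i 1)‖ₑ ^ 2 ≤ ∫⁻ x, ‖u' i x‖ₑ ^ 2 := fun n i => by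
    simp_rw [vd]
    exact aux_young (η n) (ηs n).continuous (η1 n) (u' i) (hu' i).1
  have dm : ∀ n i, MemLp (fun x => fderiv ℝ (v n) x (EuclideanSpace.single i 1)) 2 volume := fun n i =>
    aux_memLp (by
      have := (vs n).continuous_fderiv (by norm_num)
      exact Continuous.aestronglyMeasurable (by fun_prop))
      (ne_top_of_le_ne_top (fin _ (hu' i)) (vy n i))
  have key : ∀ n, ∫⁻ x, ‖v n x‖ₑ ^ 2 * (ENNReal.ofReal (‖x - a‖ ^ 2))⁻¹ ≤ 4 * ∑ i, ∫⁻ x, ‖u' i x‖ₑ ^ 2 := fun n => by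
    refine (aux_hardy_smooth (v n) (vs n) (vm n) (dm n) a).trans ?_
    exact mul_le_mul' le_rfl (Finset.sum_le_sum fun i _ => vy n i)
  have hl2 : ∀ᵐ x : E3, ‖u x‖ₑ ^ 2 * (ENNReal.ofReal (‖x - a‖ ^ 2))⁻¹ =
      Filter.liminf (fun n => ‖v n x‖ₑ ^ 2 * (ENNReal.ofReal (‖x - a‖ ^ 2))⁻¹) Filter.atTop := by
    filter_upwards [hlim, Measure.ae_ne (volume : Measure E3) a] with x hx hxa
    have hp : 0 < ‖x - a‖ := norm_pos_iff.2 (sub_ne_zero.2 hxa)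
    refine (Filter.Tendsto.liminf_eq ?_).symm
    apply ENNReal.Tendsto.mul_const _ (Or.inr (by simp; exact sub_ne_zero.2 hxa))
    exact ((ENNReal.continuous_pow 2).tendsto _).comp hx.enorm
  calc _ = _ := lintegral_congr_ae hl2
    _ ≤ _ := lintegral_liminf_le (fun n => by
        have := (vs n).continuous
        fun_prop)
    _ ≤ _ := Filter.liminf_le_of_le (by isBoundedDefault) (fun b hb => by
        obtain ⟨n, hn⟩ := hb.exists
        exact hn.trans (key n))

lemma aux_final (ψ : E3 → ℝ)
    (hψ : MemLp ψ 2 volume)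
    (hnorm : ∫ x, ψ x ^ 2 = 1)
    (Φ : E3 → ℝ≥0∞)
    (hΦ : ∀ z, Φ z = ∫⁻ y, ENNReal.ofReal (ψ y ^ 2) /
      ENNReal.ofReal (2 * π ^ 2 * ‖z - y‖ ^ 2))
    (W : E3 → ℝ≥0∞)
    (hW : ∀ x, W x = ∫⁻ y, Φ y / ENNReal.ofReal (π ^ 2 * ‖x - y‖ ^ 2)) :
    ∃ M : ℝ, 1 ≤ M ∧ ∀ (u : E3 → ℂ) (S : ℝ≥0∞), MemLp u 2 volume →
      (∀ a : E3, ∫⁻ x, ‖u x‖ₑ ^ 2 * (ENNReal.ofReal (‖x - a‖ ^ 2))⁻¹ ≤ 4 * S) →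
      ∫⁻ x, W x ^ 2 * ‖u x‖ₑ ^ 2 ≤ ENNReal.ofReal M * S := by
  obtain ⟨A, hA, hK⟩ := aux_kernel
  have hm : AEMeasurable (fun y => ENNReal.ofReal (ψ y ^ 2)) volume := by
    have := hψ.1.aemeasurable
    fun_prop
  set ρ := hm.mk _ with hρd
  have hρ : Measurable ρ := hm.measurable_mk
  have hρe : (fun y => ENNReal.ofReal (ψ y ^ 2)) =ᵐ[volume] ρ := hm.ae_eq_mk
  have hρ1 : ∫⁻ y, ρ y = 1 := by
    rw [← lintegral_congr_ae hρe, ← ofReal_integral_eq_lintegral_ofReal hψ.integrable_sq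
      (Filter.Eventually.of_forall fun x => by positivity), hnorm]
    simp
  have hpi : 1 ≤ π ^ 2 := by nlinarith [Real.pi_gt_three]
  have hΦ' : ∀ z, Φ z ≤ ∫⁻ w, ρ w * (ENNReal.ofReal (‖z - w‖ ^ 2))⁻¹ := by
    intro z
    rw [hΦ]
    apply lintegral_mono_ae
    filter_upwards [hρe] with w hw
    rw [hw, div_eq_mul_inv]
    gcongr
    nlinarith [sq_nonneg ‖z - w‖]
  have hW' : ∀ x, W x ≤ A * ∫⁻ w, ρ w * (ENNReal.ofReal ‖x - w‖)⁻¹ := by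
    intro x
    rw [hW]
    calc _ ≤ ∫⁻ y, (∫⁻ w, ρ w * (ENNReal.ofReal (‖y - w‖ ^ 2))⁻¹) * (ENNReal.ofReal (‖x - y‖ ^ 2))⁻¹ := by
          apply lintegral_mono
          intro y
          simp only
          rw [div_eq_mul_inv]
          apply mul_le_mul' (hΦ' y)
          gcongr
          nlinarith [sq_nonneg ‖x - y‖]
      _ = ∫⁻ y, ∫⁻ w, ρ w * (ENNReal.ofReal (‖y - w‖ ^ 2))⁻¹ * (ENNReal.ofReal (‖x - y‖ ^ 2))⁻¹ := by
          apply lintegral_congr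
          intro y
          rw [lintegral_mul_const _ (by fun_prop)]
      _ = ∫⁻ w, ∫⁻ y, ρ w * (ENNReal.ofReal (‖y - w‖ ^ 2))⁻¹ * (ENNReal.ofReal (‖x - y‖ ^ 2))⁻¹ := 
          lintegral_lintegral_swap (by
            apply Measurable.aemeasurable
            unfold Function.uncurry
            fun_prop)
      _ = ∫⁻ w, ρ w * ∫⁻ y, (ENNReal.ofReal (‖y - w‖ ^ 2))⁻¹ * (ENNReal.ofReal (‖x - y‖ ^ 2))⁻¹ := by
          apply lintegral_congr
          intro w
          simp_rw [mul_assoc]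
          rw [lintegral_const_mul _ (by fun_prop)]
      _ ≤ ∫⁻ w, A * (ρ w * (ENNReal.ofReal ‖x - w‖)⁻¹) := by
          apply lintegral_mono
          intro w
          simp only
          rw [mul_left_comm]
          exact mul_le_mul' le_rfl (hK x w)
      _ = _ := lintegral_const_mul' _ _ hA
  have hW2 : ∀ x, W x ^ 2 ≤ A ^ 2 * ∫⁻ w, ρ w * (ENNReal.ofReal (‖x - w‖ ^ 2))⁻¹ := by
    intro x
    refine (pow_le_pow_left' (hW' x) 2).trans ?_
    rw [mul_pow]
    gcongr
    refine (aux_jensen volume ρ (fun w => (ENNReal.ofReal ‖x - w‖)⁻¹) hρ (by fun_prop)).trans ?_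
    rw [hρ1, one_mul]
    apply le_of_eq
    apply lintegral_congr
    intro w
    rw [ENNReal.ofReal_pow (norm_nonneg _), ENNReal.inv_pow]
  refine ⟨(A ^ 2 * 4).toReal + 1, by simp, ?_⟩
  intro u S hu hS
  have hA2 : A ^ 2 ≠ ∞ := ENNReal.pow_ne_top hA
  have hA4 : A ^ 2 * 4 ≠ ∞ := ENNReal.mul_ne_top hA2 (by simp)
  calc _ ≤ ∫⁻ x, A ^ 2 * ∫⁻ w, ρ w * (‖u x‖ₑ ^ 2 * (ENNReal.ofReal (‖x - w‖ ^ 2))⁻¹) := by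
        apply lintegral_mono
        intro x
        refine (mul_le_mul' (hW2 x) le_rfl).trans (le_of_eq ?_)
        rw [mul_assoc, ← lintegral_mul_const' _ _ (by simp)]
        congr 1
        apply lintegral_congr
        intro w
        ring
    _ = A ^ 2 * ∫⁻ w, ∫⁻ x, ρ w * (‖u x‖ₑ ^ 2 * (ENNReal.ofReal (‖x - w‖ ^ 2))⁻¹) := by
        rw [lintegral_const_mul' _ _ hA2]
        congr 1
        refine lintegral_lintegral_swap ?_
        have h1 : AEMeasurable (fun p : E3 × E3 => ‖u p.1‖ₑ) (volume.prod volume) :=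
          hu.1.comp_fst.enorm
        unfold Function.uncurry
        simp only
        fun_prop
    _ ≤ A ^ 2 * ∫⁻ w, ρ w * (4 * S) := by
        gcongr with w
        have h1 : AEMeasurable (fun x : E3 => ‖u x‖ₑ) volume := hu.1.enorm
        rw [lintegral_const_mul'' _ (by fun_prop)]
        gcongr
        exact hS w
    _ = A ^ 2 * 4 * S := by
        rw [lintegral_mul_const _ hρ, hρ1, one_mul, mul_assoc]
    _ ≤ _ := by
        gcongr
        rw [← ENNReal.ofReal_toReal hA4]
        apply ENNReal.ofReal_le_ofReal
        simp

lemma aux_young2 (M : ℝ) (hM : 0 < M) (w : ℝ≥0∞) :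
    w ≤ ENNReal.ofReal (1 / (2 * M)) * w ^ 2 + ENNReal.ofReal (2 * M) := by
  rcases le_total w (ENNReal.ofReal (2 * M)) with h | h
  · exact h.trans le_add_self
  · refine le_add_right ?_
    calc w = ENNReal.ofReal (1 / (2 * M)) * ENNReal.ofReal (2 * M) * w := by
          rw [← ENNReal.ofReal_mul (by positivity), one_div_mul_cancel (by positivity)]; simp
      _ ≤ ENNReal.ofReal (1 / (2 * M)) * w * w := by gcongr
      _ = _ := by ring

/-- Let `ψ ∈ L²(ℝ³;ℝ)` be normalized, let
`φ(z) = ∫ ψ(y)²/(2π²|z−y|²) dy` and let `W = −V^φ ≥ 0` be (minus) the polarization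
potential, `W(x) = ∫ φ(y)/(π²|x−y|²) dy` (iterated integrals of nonnegative functions,
with values in `[0,∞]`). Then there is `C > 0` such that for every `u ∈ H¹(ℝ³;ℂ)`
(with weak partial derivatives `u'`):
(i) `∫ V^φ(x)²|u(x)|² dx ≤ C(‖∇u‖² + ‖u‖²)`, and
(ii) `|∫ V^φ(x)|u(x)|² dx| = ∫ W(x)|u(x)|² dx ≤ (1/2)‖∇u‖² + C‖u‖²`. -/
theorem statement6
    (ψ : EuclideanSpace ℝ (Fin 3) → ℝ)
    (hψ : MemLp ψ 2 volume)
    (hnorm : ∫ x, ψ x ^ 2 = 1)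
    (Φ : EuclideanSpace ℝ (Fin 3) → ℝ≥0∞)
    (hΦ : ∀ z, Φ z = ∫⁻ y, ENNReal.ofReal (ψ y ^ 2) /
      ENNReal.ofReal (2 * π ^ 2 * ‖z - y‖ ^ 2))
    (W : EuclideanSpace ℝ (Fin 3) → ℝ≥0∞)
    (hW : ∀ x, W x = ∫⁻ y, Φ y / ENNReal.ofReal (π ^ 2 * ‖x - y‖ ^ 2)) :
    ∃ C > 0, ∀ (u : EuclideanSpace ℝ (Fin 3) → ℂ)
      (u' : Fin 3 → EuclideanSpace ℝ (Fin 3) → ℂ),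
      MemLp u 2 volume → (∀ i, MemLp (u' i) 2 volume) →
      (∀ i, ∀ φ : EuclideanSpace ℝ (Fin 3) → ℝ,
        ContDiff ℝ (⊤ : ℕ∞) φ → HasCompactSupport φ →
        ∫ x, u x * (fderiv ℝ φ x (EuclideanSpace.single i 1) : ℂ) =
          - ∫ x, u' i x * (φ x : ℂ)) →
      (∫⁻ x, W x ^ 2 * (‖u x‖₊ : ℝ≥0∞) ^ 2 ≤
        ENNReal.ofReal (C * ((∫ x, ∑ i, ‖u' i x‖ ^ 2) + ∫ x, ‖u x‖ ^ 2))) ∧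
      (∫⁻ x, W x * (‖u x‖₊ : ℝ≥0∞) ^ 2 ≤
        ENNReal.ofReal ((1 / 2) * (∫ x, ∑ i, ‖u' i x‖ ^ 2) + C * ∫ x, ‖u x‖ ^ 2)) := by
  obtain ⟨M, hM, hmain⟩ := aux_final ψ hψ hnorm Φ hΦ W hW
  have hM0 : 0 < M := by linarith
  refine ⟨2 * M, by positivity, ?_⟩
  intro u u' hu hu' hw
  set S : ℝ≥0∞ := ∑ i, ∫⁻ x, ‖u' i x‖ₑ ^ 2 with hS
  have hSe : S = ENNReal.ofReal (∫ x, ∑ i, ‖u' i x‖ ^ 2) := by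
    rw [integral_finsetSum _ (fun i _ => (hu' i).integrable_norm_pow (by norm_num)),
      ENNReal.ofReal_sum_of_nonneg (fun i _ => integral_nonneg fun x => by positivity), hS]
    simp_rw [aux_conv (hu' _)]
  have h2 := aux_conv hu
  have h1 := hmain u S hu (fun a => aux_hardy_weak u u' hu hu' hw a)
  set I : ℝ := ∫ x, ∑ i, ‖u' i x‖ ^ 2 with hI
  set J : ℝ := ∫ x, ‖u x‖ ^ 2 with hJ
  have hI0 : 0 ≤ I := integral_nonneg fun x => by positivity
  have hJ0 : 0 ≤ J := integral_nonneg fun x => by positivity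
  rw [hSe, ← ENNReal.ofReal_mul hM0.le] at h1
  have h3 : ∫⁻ x, W x ^ 2 * (‖u x‖₊ : ℝ≥0∞) ^ 2 ≤ ENNReal.ofReal (M * I) := h1
  refine ⟨h3.trans (ENNReal.ofReal_le_ofReal (by nlinarith)), ?_⟩
  have hum : AEMeasurable (fun x => ‖u x‖ₑ) volume := hu.1.enorm
  calc _ ≤ ∫⁻ x, (ENNReal.ofReal (1 / (2 * M)) * (W x ^ 2 * ‖u x‖ₑ ^ 2) + ENNReal.ofReal (2 * M) * ‖u x‖ₑ ^ 2) := by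
        apply lintegral_mono
        intro x
        refine (mul_le_mul' (aux_young2 M hM0 (W x)) le_rfl).trans (le_of_eq ?_)
        rw [add_mul, mul_assoc]
        rfl
    _ = ENNReal.ofReal (1 / (2 * M)) * (∫⁻ x, W x ^ 2 * ‖u x‖ₑ ^ 2) + ENNReal.ofReal (2 * M) * ∫⁻ x, ‖u x‖ₑ ^ 2 := by
        rw [lintegral_add_right' _ (by fun_prop), lintegral_const_mul' _ _ ENNReal.ofReal_ne_top,
          lintegral_const_mul' _ _ ENNReal.ofReal_ne_top]
    _ ≤ ENNReal.ofReal (1 / (2 * M)) * ENNReal.ofReal (M * I) + ENNReal.ofReal (2 * M) * ENNReal.ofReal J := by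
        rw [h2]
        gcongr
    _ = _ := by
        rw [← ENNReal.ofReal_mul (by positivity), ← ENNReal.ofReal_mul (by positivity), ← ENNReal.ofReal_add (by positivity) (by positivity)]
        congr 1
        field_simp
end
end
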